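/- arXiv:2503.01575 — 2 statements merged into one kernel-verified Lean document; each statement's English description precedes it below -/
import Mathlib

section
/- Let ε > 0 and let {a_n}_{n≥1} be an increasing sequence of positive integers such that a_n ≥ n^{1+ε} for all n. Suppose limsup_{n→∞} a_n^{2^{−n}} = ∞. Then for every sequence {c_n}_{n≥1} of positive integers, the sum of the series Σ_{n=1}^∞ 1/(a_n c_n) is irrational. -/
open Filter

lemma near_sum (b : ℕ → ℕ) (T n m : ℕ) 
    (h1 : ∀ i, n ≤ i → i < m → 2 ^ T ≤ b i) (h2 : ∀ i, n ≤ i → i < m → 2 ^ i ≤ b i) :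
    ∑ i ∈ Finset.Ico n m, (1 : ℝ) / b i ≤ (T + 2) / 2 ^ T := by
  set g : ℕ → ℝ := fun i => if i < T then (1 / 2 : ℝ) ^ T else (1 / 2 : ℝ) ^ i with hg
  have hg0 : ∀ i, 0 ≤ g i := by
    intro i; simp only [hg]; split_ifs <;> positivity
  have hb : ∀ k i : ℕ, 2 ^ k ≤ b i → (1 : ℝ) / b i ≤ (1 / 2 : ℝ) ^ k := by
    intro k i h
    rw [one_div_pow]
    apply one_div_le_one_div_of_le (by positivity)
    exact_mod_cast h
  calc ∑ i ∈ Finset.Ico n m, (1 : ℝ) / b i ≤ ∑ i ∈ Finset.Ico n m, g i := by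
        apply Finset.sum_le_sum
        intro i hi
        rw [Finset.mem_Ico] at hi
        simp only [hg]
        split_ifs
        · exact hb _ _ (h1 i hi.1 hi.2)
        · exact hb _ _ (h2 i hi.1 hi.2)
    _ ≤ ∑ i ∈ Finset.range (T + m), g i := by
        apply Finset.sum_le_sum_of_subset_of_nonneg
        · intro i hi
          rw [Finset.mem_Ico] at hi
          rw [Finset.mem_range]; omega
        · intros; exact hg0 _
    _ = ∑ i ∈ Finset.range T, g i + ∑ i ∈ Finset.range m, g (T + i) := by
        rw [Finset.sum_range_add]
    _ ≤ T * (1 / 2 : ℝ) ^ T + 2 * (1 / 2 : ℝ) ^ T := by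
        apply add_le_add
        · apply le_of_eq
          rw [Finset.sum_congr rfl (g := fun _ => (1 / 2 : ℝ) ^ T)]
          · simp
          · intro i hi
            simp only [hg]
            rw [if_pos (Finset.mem_range.1 hi)]
        · have : ∀ i ∈ Finset.range m, g (T + i) = (1 / 2 : ℝ) ^ T * (1 / 2 : ℝ) ^ i := by
            intro i _
            simp only [hg]
            rw [if_neg (by omega), pow_add]
          rw [Finset.sum_congr rfl this, ← Finset.mul_sum, mul_comm]
          gcongr
          exact sum_geometric_two_le m
    _ = (T + 2) / 2 ^ T := by
        rw [one_div_pow]; ring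

lemma core (b : ℕ → ℕ) (l Q m : ℕ) (hQ : 3 ≤ Q) (hm : l ≤ m)
    (hbm : 2 ^ (Q * 2 ^ (m - l)) ≤ b m) :
    ∃ j, l + j ≤ m ∧ 2 ^ (Q * 2 ^ j - 3) ≤ b (l + j) ∧
      (∏ i ∈ Finset.range (l + j), b i) * 2 ^ (Q + 3 * j) ≤
        (∏ i ∈ Finset.range l, b i) * 2 ^ (Q * 2 ^ j) := by
  have hex : ∃ j, 2 ^ (Q * 2 ^ j - 3) ≤ b (l + j) := by
    refine ⟨m - l, ?_⟩
    rw [Nat.add_sub_cancel' hm]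
    exact le_trans (Nat.pow_le_pow_right (by norm_num) (Nat.sub_le _ _)) hbm
  classical
  refine ⟨Nat.find hex, ?_, Nat.find_spec hex, ?_⟩
  · have : Nat.find hex ≤ m - l := by
      apply Nat.find_min'
      rw [Nat.add_sub_cancel' hm]
      exact le_trans (Nat.pow_le_pow_right (by norm_num) (Nat.sub_le _ _)) hbm
    omega
  · have key : ∀ j, j ≤ Nat.find hex → (∏ i ∈ Finset.range (l + j), b i) * 2 ^ (Q + 3 * j) ≤
        (∏ i ∈ Finset.range l, b i) * 2 ^ (Q * 2 ^ j) := by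
      intro j
      induction j with
      | zero => intro _; simp
      | succ j ih =>
        intro hj
        have h1 := ih (by omega)
        have h2 : b (l + j) ≤ 2 ^ (Q * 2 ^ j - 3) := 
          (not_le.1 (Nat.find_min hex (m := j) (by omega))).le
        have h3 : 3 ≤ Q * 2 ^ j := le_trans hQ (Nat.le_mul_of_pos_right _ (by positivity))
        have h4 : b (l + j) * 2 ^ 3 ≤ 2 ^ (Q * 2 ^ j) := by
          calc b (l + j) * 2 ^ 3 ≤ 2 ^ (Q * 2 ^ j - 3) * 2 ^ 3 := by gcongr
            _ = _ := by rw [← pow_add]; congr 1; omega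
        rw [← add_assoc, Finset.prod_range_succ]
        calc _ = ((∏ i ∈ Finset.range (l + j), b i) * 2 ^ (Q + 3 * j)) * (b (l + j) * 2 ^ 3) := by
              ring
          _ ≤ ((∏ i ∈ Finset.range l, b i) * 2 ^ (Q * 2 ^ j)) * 2 ^ (Q * 2 ^ j) := by gcongr
          _ = _ := by rw [mul_assoc, ← pow_add]; congr 2; ring
    exact key _ le_rfl

/-- product times near sum -/
lemma core_near (b : ℕ → ℕ) (hmono : Monotone b) (l Q j m : ℕ) (hQ : 3 ≤ Q)
    (hj : 2 ^ (Q * 2 ^ j - 3) ≤ b (l + j))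
    (hP : (∏ i ∈ Finset.range (l + j), b i) * 2 ^ (Q + 3 * j) ≤
        (∏ i ∈ Finset.range l, b i) * 2 ^ (Q * 2 ^ j))
    (h2 : ∀ i, l + j ≤ i → i < m → 2 ^ i ≤ b i) :
    (∏ i ∈ Finset.range (l + j), (b i : ℝ)) * ∑ i ∈ Finset.Ico (l + j) m, (1 : ℝ) / b i ≤
      (∏ i ∈ Finset.range l, (b i : ℝ)) * (8 * Q / 2 ^ Q) := by
  have h3 : 3 ≤ Q * 2 ^ j := le_trans hQ (Nat.le_mul_of_pos_right _ (by positivity))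
  have hn := near_sum b (Q * 2 ^ j - 3) (l + j) m (fun i hi _ => hj.trans (hmono hi)) h2
  have hP' : (∏ i ∈ Finset.range (l + j), (b i : ℝ)) * 2 ^ (Q + 3 * j) ≤
        (∏ i ∈ Finset.range l, (b i : ℝ)) * 2 ^ (Q * 2 ^ j) := by exact_mod_cast hP
  have e1 : ((Q * 2 ^ j - 3 : ℕ) : ℝ) + 2 ≤ Q * 2 ^ j := by
    rw [Nat.cast_sub h3]; push_cast; linarith
  have e2 : (2 : ℝ) ^ (Q * 2 ^ j) = 2 ^ (Q * 2 ^ j - 3) * 8 := by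
    have : (8 : ℝ) = 2 ^ 3 := by norm_num
    rw [this, ← pow_add]; congr 1; omega
  set P := ∏ i ∈ Finset.range (l + j), (b i : ℝ)
  set P0 := ∏ i ∈ Finset.range l, (b i : ℝ)
  have hP0 : 0 ≤ P := Finset.prod_nonneg (fun _ _ => by positivity)
  have hP00 : 0 ≤ P0 := Finset.prod_nonneg (fun _ _ => by positivity)
  set X : ℝ := 2 ^ (Q * 2 ^ j - 3) with hX
  have hXp : 0 < X := by positivity
  rw [e2] at hP'
  have hPle : P ≤ P0 * (X * 8) / 2 ^ (Q + 3 * j) := by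
    rw [le_div_iff₀ (by positivity)]; exact hP'
  calc _ ≤ (P0 * (X * 8) / 2 ^ (Q + 3 * j)) * ((Q * 2 ^ j) / X) := by
        gcongr
        exact hn.trans (by gcongr)
    _ = P0 * (8 * Q / 2 ^ Q) * (2 ^ j / 2 ^ (3 * j)) := by
        rw [pow_add]; field_simp
    _ ≤ P0 * (8 * Q / 2 ^ Q) * 1 := by
        gcongr
        rw [div_le_one (by positivity)]
        exact pow_le_pow_right₀ (by norm_num) (by omega)
    _ = _ := by ring

lemma far (ε : ℝ) (hε : 0 < ε) : ∃ δ : ℝ, 0 < δ ∧ ∃ C : ℝ, 0 < C ∧ ∀ b : ℕ → ℕ, Monotone b →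
    (∀ n : ℕ, ((n + 1 : ℕ) : ℝ) ^ (1 + ε) ≤ b n) → 
    Summable (fun i => (1 : ℝ) / b i) ∧
    ∀ m, ∑' i, (1 : ℝ) / b (i + m) ≤ C * (b m : ℝ) ^ (-δ) := by
  have hs : Summable (fun n : ℕ => ((n + 1 : ℕ) : ℝ) ^ (-(1 + ε / 2))) := by
    rw [summable_nat_add_iff 1 (f := fun n : ℕ => (n : ℝ) ^ (-(1 + ε / 2)))]
    exact Real.summable_nat_rpow.2 (by linarith)
  refine ⟨(ε / 2) / (1 + ε), by positivity, ∑' n : ℕ, ((n + 1 : ℕ) : ℝ) ^ (-(1 + ε / 2)),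
    hs.tsum_pos (fun _ => by positivity) 0 (by simp), ?_⟩
  intro b hb hg
  have hpos : ∀ n, (0 : ℝ) < b n := fun n => lt_of_lt_of_le (by positivity) (hg n)
  set δ := (ε / 2) / (1 + ε) with hδ
  have hδ0 : 0 < δ := by positivity
  have hδ1 : (1 + ε) * (1 - δ) = 1 + ε / 2 := by rw [hδ]; field_simp; ring
  have hδ2 : 0 < 1 - δ := by
    by_contra h
    have : (1 + ε) * (1 - δ) ≤ 0 := mul_nonpos_of_nonneg_of_nonpos (by linarith) (by linarith)
    linarith
  have hterm : ∀ i m : ℕ, (1 : ℝ) / b (i + m) ≤ 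
      (b m : ℝ) ^ (-δ) * ((i + 1 : ℕ) : ℝ) ^ (-(1 + ε / 2)) := by
    intro i m
    have e : (1 : ℝ) / b (i + m) = (b (i + m) : ℝ) ^ (-δ) * (b (i + m) : ℝ) ^ (-(1 - δ)) := by
      rw [← Real.rpow_add (hpos _), one_div, ← Real.rpow_neg_one]; congr 1; ring
    rw [e]
    apply mul_le_mul
    · apply Real.rpow_le_rpow_of_nonpos (hpos _) _ (by linarith)
      exact_mod_cast hb (by omega : m ≤ i + m)
    · rw [← hδ1, show -((1 + ε) * (1 - δ)) = (1 + ε) * (-(1 - δ)) by ring,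
        Real.rpow_mul (by positivity)]
      apply Real.rpow_le_rpow_of_nonpos (by positivity) _ (by linarith)
      refine (hg i).trans ?_
      exact_mod_cast hb (by omega : i ≤ i + m)
    · positivity
    · positivity
  have hsum : Summable (fun i => (1 : ℝ) / b i) :=
    Summable.of_nonneg_of_le (fun i => by positivity) (fun i => hterm i 0) (hs.mul_left _)
  refine ⟨hsum, fun m => ?_⟩
  rw [mul_comm, ← tsum_mul_left]
  exact Summable.tsum_le_tsum (fun i => hterm i m) 
    ((summable_nat_add_iff m (f := fun i => (1 : ℝ) / b i)).2 hsum) (hs.mul_left _)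

lemma poly_lim : Tendsto (fun l : ℕ => ((l ^ 2 + l + 3 : ℕ) : ℝ) * (1 / 2 : ℝ) ^ l) atTop (nhds 0) := by
  have h (k : ℕ) := tendsto_pow_const_mul_const_pow_of_lt_one k (r := (1 / 2 : ℝ)) 
    (by norm_num) (by norm_num)
  have := ((h 2).add (h 1)).add ((h 0).const_mul 3)
  simp only [mul_zero, add_zero] at this
  refine this.congr (fun l => ?_)
  push_cast; ring

lemma pow_lim (δ : ℝ) (hδ : 0 < δ) : 
    Tendsto (fun l : ℕ => (2 : ℝ) ^ (-(δ * (2 : ℝ) ^ l))) atTop (nhds 0) := by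
  have h1 : Tendsto (fun l : ℕ => δ * (2 : ℝ) ^ l) atTop atTop :=
    (tendsto_pow_atTop_atTop_of_one_lt (by norm_num)).const_mul_atTop hδ
  have h2 : Tendsto (fun x : ℝ => (2 : ℝ) ^ (-x)) atTop (nhds 0) := by
    have := tendsto_rpow_atBot_of_base_gt_one (2 : ℝ) (by norm_num)
    exact this.comp tendsto_neg_atTop_atBot
  exact h2.comp h1

lemma tail_split (b : ℕ → ℕ) (hs : Summable (fun i => (1 : ℝ) / b i)) (n m : ℕ) (h : n ≤ m) :
    ∑' i, (1 : ℝ) / b (i + n) = ∑ i ∈ Finset.Ico n m, (1 : ℝ) / b i + ∑' i, (1 : ℝ) / b (i + m) := by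
  have h1 := hs.sum_add_tsum_nat_add n
  have h2 := hs.sum_add_tsum_nat_add m
  have h3 := Finset.sum_range_add_sum_Ico (fun i => (1 : ℝ) / b i) h
  linarith

lemma key (ε : ℝ) (hε : 0 < ε) (b : ℕ → ℕ) (hmono : Monotone b)
    (hg : ∀ n : ℕ, ((n + 1 : ℕ) : ℝ) ^ (1 + ε) ≤ b n)
    (hbig : ∀ B N : ℕ, ∃ m, N ≤ m ∧ 2 ^ (B * 2 ^ m) ≤ b m) (q : ℕ) (hq : 0 < q) :
    ∃ n, (q : ℝ) * ((∏ i ∈ Finset.range n, (b i : ℝ)) * ∑' i, (1 : ℝ) / b (i + n)) < 1 := by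
  obtain ⟨δ, hδ, C, hC, hfar⟩ := far ε hε
  obtain ⟨hs, hfar⟩ := hfar b hmono hg
  have hq' : (0 : ℝ) < q := by exact_mod_cast hq
  by_cases hcase : ∃ l, ∀ i, l ≤ i → 2 ^ i ≤ b i
  · obtain ⟨l, hl⟩ := hcase
    have hlim : Tendsto (fun Q : ℕ => (q : ℝ) * ((∏ i ∈ Finset.range l, (b i : ℝ)) * (8 * Q / 2 ^ Q)))
        atTop (nhds 0) := by
      have h := tendsto_pow_const_mul_const_pow_of_lt_one 1 (r := (1 / 2 : ℝ)) 
        (by norm_num) (by norm_num)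
      have := h.const_mul ((q : ℝ) * (∏ i ∈ Finset.range l, (b i : ℝ)) * 8)
      rw [mul_zero] at this
      refine this.congr (fun Q => ?_)
      rw [one_div_pow]; ring
    obtain ⟨Q, hQ, hQ3⟩ := ((hlim.eventually_lt_const zero_lt_one).and (eventually_ge_atTop 3)).exists
    obtain ⟨m, hlm, hm⟩ := hbig Q l
    obtain ⟨j, hjm, hj, hP⟩ := core b l Q m hQ3 hlm (le_trans (Nat.pow_le_pow_right (by norm_num) 
      (Nat.mul_le_mul_left _ (Nat.pow_le_pow_right (by norm_num) (Nat.sub_le _ _)))) hm)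
    refine ⟨l + j, lt_of_le_of_lt ?_ hQ⟩
    gcongr (q : ℝ) * ?_
    have hs' := (summable_nat_add_iff (l + j) (f := fun i => (1 : ℝ) / b i)).2 hs
    have ht := (hs'.hasSum.tendsto_sum_nat).const_mul (∏ i ∈ Finset.range (l + j), (b i : ℝ))
    refine le_of_tendsto ht (Eventually.of_forall fun N => ?_)
    have := core_near b hmono l Q j (l + j + N) hQ3 hj hP (fun i hi _ => hl i (by omega))
    rw [Finset.sum_Ico_eq_sum_range, Nat.add_sub_cancel_left] at this
    simpa [add_comm, add_left_comm] using this
  · push Not at hcase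
    have E1 : ∀ᶠ l : ℕ in atTop, (q : ℝ) * (((l ^ 2 + l + 3 : ℕ) : ℝ) * (1 / 2 : ℝ) ^ l) < 1 / 2 := by
      have := poly_lim.const_mul (q : ℝ)
      rw [mul_zero] at this
      exact this.eventually_lt_const (by norm_num)
    have E2 : ∀ᶠ l : ℕ in atTop, (((l ^ 2 + l + 3 : ℕ) : ℝ) * (1 / 2 : ℝ) ^ l) < min (δ / 2) 1 :=
      poly_lim.eventually_lt_const (by positivity)
    have E3 : ∀ᶠ l : ℕ in atTop, (q : ℝ) * C * (2 : ℝ) ^ (-(δ / 2 * (2 : ℝ) ^ l)) < 1 / 2 := by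
      have := (pow_lim (δ / 2) (by positivity)).const_mul ((q : ℝ) * C)
      rw [mul_zero] at this
      exact this.eventually_lt_const (by norm_num)
    obtain ⟨l0, hl0⟩ := eventually_atTop.1 ((E1.and E2).and E3)
    obtain ⟨l1, hl1, hslow1⟩ := hcase l0
    obtain ⟨m, hm1, hm⟩ := hbig 1 l1
    classical
    set l := Nat.findGreatest (fun i => b i < 2 ^ i) m with hldef
    have hl1l : l1 ≤ l := Nat.le_findGreatest hm1 hslow1
    have hlm : l ≤ m := Nat.findGreatest_le m
    have hslow : b l < 2 ^ l := Nat.findGreatest_spec (P := fun i => b i < 2 ^ i) hm1 hslow1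
    have hfast : ∀ i, l < i → i ≤ m → 2 ^ i ≤ b i := fun i h1 h2 => 
      not_lt.1 (Nat.findGreatest_is_greatest (P := fun i => b i < 2 ^ i) h1 h2)
    obtain ⟨⟨e1, e2⟩, e3⟩ := hl0 l (hl1.trans hl1l)
    set Q := l ^ 2 + l + 3 with hQ
    rw [lt_min_iff] at e2
    obtain ⟨e2, e2'⟩ := e2
    rw [one_div_pow, mul_one_div] at e1 e2 e2'
    have hQl : Q ≤ 2 ^ l := by
      rw [div_lt_one (by positivity)] at e2'
      exact_mod_cast e2'.le
    have hQm : Q * 2 ^ (m - l) ≤ 2 ^ m := by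
      calc Q * 2 ^ (m - l) ≤ 2 ^ l * 2 ^ (m - l) := by gcongr
        _ = 2 ^ m := by rw [← pow_add]; congr 1; omega
    rw [one_mul] at hm
    obtain ⟨j, hjm, hj, hP⟩ := core b l Q m (by omega) hlm 
      (le_trans (Nat.pow_le_pow_right (by norm_num) hQm) hm)
    have hn := core_near b hmono l Q j m (by omega) hj hP (by
      intro i h1 h2
      rcases Nat.lt_or_ge l i with h | h
      · exact hfast i h h2.le
      · exfalso
        have h0 : j = 0 := by omega
        subst h0
        have : 2 ^ l ≤ 2 ^ (Q * 2 ^ 0 - 3) := Nat.pow_le_pow_right (by norm_num) (by simp [hQ])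
        simp only [add_zero] at hj
        omega)
    have hPl : (∏ i ∈ Finset.range l, b i) ≤ 2 ^ (l ^ 2) := by
      calc (∏ i ∈ Finset.range l, b i) ≤ ∏ i ∈ Finset.range l, 2 ^ l := by
            apply Finset.prod_le_prod' 
            intro i hi
            exact (hmono (Finset.mem_range.1 hi).le).trans hslow.le
        _ = 2 ^ (l ^ 2) := by simp [← pow_mul, sq]
    have hPl' : (∏ i ∈ Finset.range l, (b i : ℝ)) ≤ 2 ^ (l ^ 2) := by exact_mod_cast hPl
    have hPn : (∏ i ∈ Finset.range (l + j), b i) ≤ 2 ^ (Q * 2 ^ (m - l)) := by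
      have h1 : (∏ i ∈ Finset.range (l + j), b i) * 2 ^ (Q + 3 * j) ≤ 
          2 ^ (Q * 2 ^ j) * 2 ^ (Q + 3 * j) := by
        refine hP.trans ?_
        rw [mul_comm]
        gcongr
        refine hPl.trans (Nat.pow_le_pow_right (by norm_num) (by omega))
      refine (Nat.le_of_mul_le_mul_right h1 (by positivity)).trans ?_
      apply Nat.pow_le_pow_right (by norm_num)
      gcongr
      · norm_num
      · omega
    have hPn' : (∏ i ∈ Finset.range (l + j), (b i : ℝ)) ≤ (2 : ℝ) ^ (δ / 2 * 2 ^ m) := by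
      have h1 : (∏ i ∈ Finset.range (l + j), (b i : ℝ)) ≤ (2 : ℝ) ^ (Q * 2 ^ (m - l)) := by
        exact_mod_cast hPn
      refine h1.trans ?_
      rw [← Real.rpow_natCast]
      apply Real.rpow_le_rpow_of_exponent_le (by norm_num)
      push_cast
      rw [div_lt_iff₀ (by positivity)] at e2
      calc (Q : ℝ) * 2 ^ (m - l) ≤ (δ / 2 * 2 ^ l) * 2 ^ (m - l) := by gcongr
        _ = δ / 2 * 2 ^ m := by rw [mul_assoc, ← pow_add]; congr 2; omega
    have hfarm : ∑' i, (1 : ℝ) / b (i + m) ≤ C * (2 : ℝ) ^ (-(δ * 2 ^ m)) := by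
      refine (hfar m).trans ?_
      gcongr
      have h1 : (2 : ℝ) ^ (2 ^ m : ℕ) ≤ b m := by exact_mod_cast hm
      calc (b m : ℝ) ^ (-δ) ≤ ((2 : ℝ) ^ (2 ^ m : ℕ)) ^ (-δ) := 
            Real.rpow_le_rpow_of_nonpos (by positivity) h1 (by linarith)
        _ = _ := by
          rw [← Real.rpow_natCast, ← Real.rpow_mul (by norm_num)]
          congr 1; push_cast; ring
    have hP0 : 0 ≤ ∏ i ∈ Finset.range (l + j), (b i : ℝ) := Finset.prod_nonneg (fun _ _ => by positivity)
    refine ⟨l + j, ?_⟩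
    rw [tail_split b hs (l + j) m hjm, mul_add, mul_add]
    have A1 : (q : ℝ) * ((∏ i ∈ Finset.range (l + j), (b i : ℝ)) * 
        ∑ i ∈ Finset.Ico (l + j) m, (1 : ℝ) / b i) < 1 / 2 := by
      refine lt_of_le_of_lt ?_ e1
      gcongr (q : ℝ) * ?_
      refine hn.trans ?_
      calc _ ≤ (2 : ℝ) ^ (l ^ 2) * (8 * Q / 2 ^ Q) := by gcongr
        _ = Q / 2 ^ l := by
          have : (2 : ℝ) ^ Q = 2 ^ (l ^ 2) * 2 ^ l * 8 := by
            rw [hQ, pow_add, pow_add]; norm_num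
          rw [this]; field_simp
    have A2 : (q : ℝ) * ((∏ i ∈ Finset.range (l + j), (b i : ℝ)) * 
        ∑' i, (1 : ℝ) / b (i + m)) < 1 / 2 := by
      refine lt_of_le_of_lt ?_ e3
      calc _ ≤ (q : ℝ) * ((2 : ℝ) ^ (δ / 2 * 2 ^ m) * (C * (2 : ℝ) ^ (-(δ * 2 ^ m)))) := by
            gcongr
        _ = q * C * (2 : ℝ) ^ (-(δ / 2 * 2 ^ m)) := by
            have : -(δ / 2 * (2 : ℝ) ^ m) = δ / 2 * 2 ^ m + -(δ * 2 ^ m) := by ring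
            rw [this, Real.rpow_add (by norm_num)]; ring
        _ ≤ _ := by
            gcongr
            · norm_num
            · norm_num
    linarith

lemma irr (b : ℕ → ℕ) (hpos : ∀ n, 0 < b n) (hs : Summable (fun i => (1 : ℝ) / b i))
    (h : ∀ q : ℕ, 0 < q → 
      ∃ n, (q : ℝ) * ((∏ i ∈ Finset.range n, (b i : ℝ)) * ∑' i, (1 : ℝ) / b (i + n)) < 1) :
    Irrational (∑' i, (1 : ℝ) / b i) := by
  rintro ⟨r, hr⟩
  obtain ⟨n, hn⟩ := h r.den r.pos
  have hint : ∀ n, ∃ z : ℤ, (∏ i ∈ Finset.range n, (b i : ℝ)) * ∑ i ∈ Finset.range n, (1 : ℝ) / b i = z := by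
    intro n
    induction n with
    | zero => exact ⟨0, by simp⟩
    | succ n ih =>
      obtain ⟨z, hz⟩ := ih
      refine ⟨z * b n + ∏ i ∈ Finset.range n, (b i : ℤ), ?_⟩
      have : (b n : ℝ) ≠ 0 := by exact_mod_cast (hpos n).ne'
      rw [Finset.prod_range_succ, Finset.sum_range_succ]
      push_cast
      rw [← hz]
      field_simp
  obtain ⟨z, hz⟩ := hint n
  have hsp := hs.sum_add_tsum_nat_add n
  have hP : (0 : ℝ) < ∏ i ∈ Finset.range n, (b i : ℝ) := 
    Finset.prod_pos (fun i _ => by exact_mod_cast hpos i)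
  have hs' := (summable_nat_add_iff n (f := fun i => (1 : ℝ) / b i)).2 hs
  have hb : ∀ i, (0 : ℝ) < 1 / b i := fun i => by have := hpos i; positivity
  have ht : 0 < ∑' i, (1 : ℝ) / b (i + n) := hs'.tsum_pos (fun i => (hb _).le) 0 (hb _)
  have hpos' : 0 < (r.den : ℝ) * ((∏ i ∈ Finset.range n, (b i : ℝ)) * ∑' i, (1 : ℝ) / b (i + n)) := by
    have := r.pos
    positivity
  have hrd : (r : ℝ) * r.den = r.num := by exact_mod_cast Rat.mul_den_eq_num r
  have : (r.den : ℝ) * ((∏ i ∈ Finset.range n, (b i : ℝ)) * ∑' i, (1 : ℝ) / b (i + n)) = 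
      ((r.num * (∏ i ∈ Finset.range n, (b i : ℤ)) - r.den * z : ℤ) : ℝ) := by
    push_cast
    rw [← hz, ← hrd, hr, ← hsp]; ring
  rw [this] at hn hpos'
  have h1 : r.num * (∏ i ∈ Finset.range n, (b i : ℤ)) - r.den * z < 1 := by exact_mod_cast hn
  have h2 : 0 < r.num * (∏ i ∈ Finset.range n, (b i : ℤ)) - r.den * z := by exact_mod_cast hpos'
  omega

lemma sorting (b : ℕ → ℕ) (hb : ∀ n, n ≤ b n) : ∃ σ : ℕ ≃ ℕ, Monotone (b ∘ σ) := by
  set k : ℕ → ℕ := fun i => b i * (b i + 1) + i with hk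
  have hlt : ∀ i j, b i < b j → k i < k j := by
    intro i j h
    have := hb i
    have h2 : (b i + 1) * (b i + 2) ≤ b j * (b j + 1) := Nat.mul_le_mul h (by omega)
    simp only [hk]
    nlinarith
  have hinj : Function.Injective k := by
    intro i j h
    rcases lt_trichotomy (b i) (b j) with h1 | h1 | h1
    · have := hlt _ _ h1; omega
    · simp only [hk, h1] at h; omega
    · have := hlt _ _ h1; omega
  classical
  have : Infinite (Set.range k) := Set.infinite_coe_iff.2 (Set.infinite_range_of_injective hinj)
  let e := Nat.Subtype.orderIsoOfNat (Set.range k)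
  let f := Equiv.ofInjective k hinj
  refine ⟨e.toEquiv.trans f.symm, ?_⟩
  intro x y hxy
  have hk' : ∀ x, k (f.symm (e x)) = e x := fun x => by
    have := Equiv.apply_ofInjective_symm hinj (e x)
    exact this
  have h1 : (e x : ℕ) ≤ e y := e.monotone hxy
  rw [← hk', ← hk'] at h1
  by_contra h
  have := hlt _ _ (not_le.1 h)
  exact absurd h1 (not_le.2 this)

lemma sorted_ge (A b : ℕ → ℕ) (hA : Monotone A) (hAb : ∀ n, A n ≤ b n) (σ : ℕ ≃ ℕ)
    (h : Monotone (b ∘ σ)) (n : ℕ) : A n ≤ (b ∘ σ) n := by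
  have : ∃ j ∈ Finset.range (n + 1), n ≤ σ j := by
    by_contra hc
    push Not at hc
    have := Finset.card_le_card_of_injOn (s := Finset.range (n + 1)) (t := Finset.range n) σ
      (fun j hj => by simpa using hc j (by simpa using hj)) σ.injective.injOn
    simp at this
  obtain ⟨j, hj, hn⟩ := this
  exact ((hA hn).trans (hAb _)).trans (h (by simpa [Nat.lt_succ_iff] using hj))

theorem stmt_18 (ε : ℝ) (hε : 0 < ε) (a : ℕ → ℕ)
    (hpos : ∀ n : ℕ, 1 ≤ n → 0 < a n)
    (hmono : ∀ n : ℕ, 1 ≤ n → a n ≤ a (n + 1))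
    (hgrow : ∀ n : ℕ, 1 ≤ n → (n : ℝ) ^ (1 + ε) ≤ (a n : ℝ))
    (hlimsup : Filter.limsup (fun n : ℕ =>
      (((a n : ℝ) ^ ((2 : ℝ) ^ (-(n : ℝ))) : ℝ) : EReal)) Filter.atTop = ⊤) :
    ∀ c : ℕ → ℕ, (∀ n, 0 < c n) →
      ∃ L : ℝ,
        Tendsto (fun N => ∑ n ∈ Finset.Icc 1 N,
          1 / ((a n : ℝ) * (c n : ℝ))) atTop (nhds L) ∧
        Irrational L := by
  intro c hc
  set A : ℕ → ℕ := fun n => a (n + 1) with hAdef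
  set b : ℕ → ℕ := fun n => a (n + 1) * c (n + 1) with hbdef
  have hA : Monotone A := monotone_nat_of_le_succ (fun n => hmono (n + 1) (by omega))
  have hAb : ∀ n, A n ≤ b n := fun n => Nat.le_mul_of_pos_right _ (hc _)
  have hgA : ∀ n : ℕ, ((n + 1 : ℕ) : ℝ) ^ (1 + ε) ≤ A n := fun n => hgrow (n + 1) (by omega)
  have hnA : ∀ n, n ≤ A n := by
    intro n
    have h1 : ((n + 1 : ℕ) : ℝ) ^ (1 : ℝ) ≤ ((n + 1 : ℕ) : ℝ) ^ (1 + ε) := 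
      Real.rpow_le_rpow_of_exponent_le (by push_cast; linarith [(Nat.cast_nonneg n : (0 : ℝ) ≤ n)]) 
        (by linarith)
    rw [Real.rpow_one] at h1
    have h2 : n + 1 ≤ A n := by exact_mod_cast h1.trans (hgA n)
    omega
  have hbigA : ∀ B N : ℕ, ∃ m, N ≤ m ∧ 2 ^ (B * 2 ^ m) ≤ A m := by
    intro B N
    have hf : ∃ᶠ n : ℕ in atTop, (((2 ^ B : ℝ) : ℝ) : EReal) < 
        (((a n : ℝ) ^ ((2 : ℝ) ^ (-(n : ℝ))) : ℝ) : EReal) := by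
      apply frequently_lt_of_lt_limsup
      · isBoundedDefault
      · rw [hlimsup]; exact EReal.coe_lt_top _
    obtain ⟨n, hn, hlt⟩ := (frequently_atTop.1 hf) (N + 1)
    rw [EReal.coe_lt_coe_iff] at hlt
    obtain ⟨m, rfl⟩ : ∃ m, n = m + 1 := ⟨n - 1, by omega⟩
    refine ⟨m, by omega, ?_⟩
    have h1 : ((2 : ℝ) ^ B) ^ (2 ^ (m + 1)) ≤ (a (m + 1) : ℝ) := by
      calc ((2 : ℝ) ^ B) ^ (2 ^ (m + 1)) ≤ 
          ((a (m + 1) : ℝ) ^ ((2 : ℝ) ^ (-((m + 1 : ℕ) : ℝ)))) ^ (2 ^ (m + 1)) := by gcongr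
        _ = (a (m + 1) : ℝ) := by
          rw [← Real.rpow_natCast, ← Real.rpow_mul (by positivity)]
          push_cast
          rw [← Real.rpow_natCast 2 (m + 1), ← Real.rpow_add (by norm_num)]
          push_cast
          simp
    have h2 : (2 ^ B) ^ (2 ^ (m + 1)) ≤ a (m + 1) := by exact_mod_cast h1
    rw [← pow_mul] at h2
    refine le_trans (Nat.pow_le_pow_right (by norm_num) ?_) h2
    exact Nat.mul_le_mul_left _ (Nat.pow_le_pow_right (by norm_num) (by omega))
  obtain ⟨σ, hσ⟩ := sorting b (fun n => (hnA n).trans (hAb n))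
  have hge := sorted_ge A b hA hAb σ hσ
  have hg : ∀ n : ℕ, ((n + 1 : ℕ) : ℝ) ^ (1 + ε) ≤ (b ∘ σ) n := fun n => 
    (hgA n).trans (by exact_mod_cast hge n)
  have hbpos : ∀ n, 0 < b n := fun n => Nat.mul_pos (hpos _ (by omega)) (hc _)
  obtain ⟨δ, hδ, C, hC, hfar⟩ := far ε hε
  obtain ⟨hs, -⟩ := hfar (b ∘ σ) hσ hg
  have hirr := irr (b ∘ σ) (fun n => hbpos _) hs (fun q hq => key ε hε (b ∘ σ) hσ hg 
    (fun B N => by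
      obtain ⟨m, h1, h2⟩ := hbigA B N
      exact ⟨m, h1, h2.trans (hge m)⟩) q hq)
  refine ⟨_, ?_, hirr⟩
  have hsum : HasSum (fun i => (1 : ℝ) / b i) (∑' i, (1 : ℝ) / (b ∘ σ) i) := by
    rw [← σ.hasSum_iff]
    exact hs.hasSum
  refine hsum.tendsto_sum_nat.congr (fun N => ?_)
  have h := Finset.sum_Ico_add' (fun n => 1 / ((a n : ℝ) * (c n : ℝ))) 0 N 1
  rw [show Finset.Icc 1 N = Finset.Ico (0 + 1) (N + 1) by ext; simp, ← h,
    Finset.range_eq_Ico]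
  simp [hbdef]
end

section
/- Let ψ be the unique real root of the polynomial x³ − x² − 1 (the supergolden ratio, ψ ≈ 1.4656). Let {h_n}_{n≥1} be a strictly increasing sequence of positive integers such that h_n ≥ (8/3)^n for infinitely many n. Then the infinite product ∏_{n=1}^∞ (1 + ψ^{−h_n}) converges to a real number that is transcendental over ℚ. -/
open Filter


section NormPart
open Polynomial

lemma exists_beta (α : ℝ) :
    ∃ β : ℂ, β.re = -α / 2 ∧ β.re ^ 2 + β.im ^ 2 = α ^ 2 + 1 := by
  refine ⟨⟨-α / 2, Real.sqrt (α ^ 2 + 1 - α ^ 2 / 4)⟩, rfl, ?_⟩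
  simp only
  rw [Real.sq_sqrt (by nlinarith [sq_nonneg α])]
  ring

lemma beta_root (α : ℝ) (hα : α ^ 3 + α = 1) (β : ℂ) (h1 : β.re = -α / 2)
    (h2 : β.re ^ 2 + β.im ^ 2 = α ^ 2 + 1) : β ^ 3 + β - 1 = 0 := by
  have hα' : (α : ℂ) ^ 3 + α = 1 := by exact_mod_cast hα
  have e : β ^ 2 + α * β + (α ^ 2 + 1) = 0 := by
    apply Complex.ext
    · simp [pow_two]
      rw [h1] at h2 ⊢
      linear_combination -h2
    · simp [pow_two, h1]
      ring
  linear_combination (β - α) * e + hα'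

lemma irr_ply : Irreducible (X ^ 3 + X - 1 : ℚ[X]) := by
  have hd : (X ^ 3 + X - 1 : ℚ[X]).natDegree = 3 := by compute_degree!
  rw [Polynomial.irreducible_iff_roots_eq_zero_of_degree_le_three (by omega) (by omega)]
  rw [Multiset.eq_zero_iff_forall_notMem]
  intro r hr
  have hr' := (Polynomial.mem_roots'.1 hr).2
  simp only [IsRoot, eval_sub, eval_add, eval_pow, eval_X, eval_one] at hr'
  have hint : IsIntegral ℤ r := by
    refine ⟨X ^ 3 + X - 1, by monicity!, ?_⟩
    simpa using hr'
  obtain ⟨n, hn⟩ := IsIntegrallyClosed.isIntegral_iff.1 hint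
  have hn' : (n : ℚ) = r := by simpa using hn
  rw [← hn'] at hr'
  have h3 : n ^ 3 + n - 1 = 0 := by exact_mod_cast hr'
  have h4 : n * (n ^ 2 + 1) = 1 := by linarith
  rcases Int.eq_one_or_neg_one_of_mul_eq_one h4 with h | h <;> subst h <;> norm_num at h4

lemma norm_low (α : ℝ) (hα0 : 0 < α) (hα : α ^ 3 + α = 1) (β : ℂ) (h1 : β.re = -α / 2)
    (h2 : β.re ^ 2 + β.im ^ 2 = α ^ 2 + 1) (p : ℤ[X]) (hp : aeval α p ≠ 0) :
    1 ≤ |aeval α p| * ‖aeval β p‖ ^ 2 := by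
  have hβ := beta_root α hα β h1 h2
  have hβ0 : aeval β p ≠ 0 := by
    intro h0
    have hq : aeval β (p.map (Int.castRingHom ℚ)) = 0 := by
      have := Polynomial.aeval_map_algebraMap (A := ℚ) β p
      simpa [h0] using this
    have hqα : aeval α (p.map (Int.castRingHom ℚ)) ≠ 0 := by
      have := Polynomial.aeval_map_algebraMap (A := ℚ) α p
      simp only [algebraMap_int_eq] at this
      rwa [this]
    rcases (EuclideanDomain.dvd_or_coprime _ (p.map (Int.castRingHom ℚ)) irr_ply).symm with hc | hc
    · obtain ⟨u, v, huv⟩ := hc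
      have := congrArg (aeval β) huv
      simp [hq, hβ] at this
    · obtain ⟨u, hu⟩ := hc
      apply hqα
      rw [hu]
      have : α ^ 3 + α - 1 = 0 := by linarith
      simp [this]
  have hmon : (X ^ 3 + X - 1 : ℤ[X]).Monic := by monicity!
  have hd : (X ^ 3 + X - 1 : ℤ[X]).natDegree = 3 := by compute_degree!
  set r := p %ₘ (X ^ 3 + X - 1) with hr
  have hrd : r.natDegree < 3 := by
    have := Polynomial.natDegree_modByMonic_lt p hmon (by intro h; rw [h] at hd; simp at hd)
    rwa [hd] at this
  have hpe : p = r + (X ^ 3 + X - 1) * (p /ₘ (X ^ 3 + X - 1)) :=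
    (Polynomial.modByMonic_add_div p (X ^ 3 + X - 1)).symm
  obtain ⟨a, b, c, hrr⟩ : ∃ a b c : ℤ, r = C a + C b * X + C c * X ^ 2 := by
    refine ⟨r.coeff 0, r.coeff 1, r.coeff 2, ?_⟩
    conv_lhs => rw [Polynomial.as_sum_range' r 3 hrd]
    simp [Finset.sum_range_succ, ← Polynomial.C_mul_X_pow_eq_monomial]
  have eα : aeval α p = a + b * α + c * α ^ 2 := by
    rw [hpe, hrr]
    have : α ^ 3 + α - 1 = 0 := by linarith
    simp [this]
  have eβ : aeval β p = a + b * β + c * β ^ 2 := by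
    rw [hpe, hrr]
    simp [hβ]
  have key : aeval α p * ‖aeval β p‖ ^ 2 =
      ((a^3+b^3+c^3 -2*a^2*c + a*b^2 + a*c^2 + b*c^2 - 3*a*b*c : ℤ) : ℝ) := by
    rw [eα, eβ, Complex.sq_norm, Complex.normSq_apply]
    have him : β.im ^ 2 = α ^ 2 + 1 - α ^ 2 / 4 := by rw [h1] at h2; linarith
    have e2 : (↑a + ↑b * β + ↑c * β ^ 2 : ℂ).re * (↑a + ↑b * β + ↑c * β ^ 2 : ℂ).re
        + (↑a + ↑b * β + ↑c * β ^ 2 : ℂ).im * (↑a + ↑b * β + ↑c * β ^ 2 : ℂ).im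
        = a^2 + b^2 * (α^2+1) + c^2 * (α^2+1)^2 - a*b*α + a*c*(α^2-2*(α^2+1)) - b*c*(α^2+1)*α := by
      have hre : (↑a + ↑b * β + ↑c * β ^ 2 : ℂ).re = a + b * β.re + c * (β.re^2 - β.im^2) := by
        simp [pow_two]
      have him2 : (↑a + ↑b * β + ↑c * β ^ 2 : ℂ).im = b * β.im + c * (2 * β.re * β.im) := by
        simp [pow_two]; left; ring
      rw [hre, him2, h1, him]
      have : (b * β.im + c * (2 * (-α/2) * β.im)) * (b * β.im + c * (2 * (-α/2) * β.im))
        = (b - c * α)^2 * β.im^2 := by ring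
      rw [this, him]
      ring
    rw [e2]
    push_cast
    linear_combination (-3*a*b*c + b^3 + b*c^2 + c^3*(α^3+α+1) : ℝ) * hα
  have hne : (a^3+b^3+c^3 -2*a^2*c + a*b^2 + a*c^2 + b*c^2 - 3*a*b*c : ℤ) ≠ 0 := by
    intro h0
    rw [h0, Int.cast_zero] at key
    rcases mul_eq_zero.1 key with h | h
    · exact hp h
    · exact hβ0 (by simpa using h)
  have h5 : |aeval α p| * ‖aeval β p‖ ^ 2 = |aeval α p * ‖aeval β p‖ ^ 2| := by
    rw [abs_mul, abs_of_nonneg (sq_nonneg ‖aeval β p‖)]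
  rw [h5, key, ← Int.cast_abs]
  exact_mod_cast Int.one_le_abs hne

end NormPart


section RealPart
open Polynomial

lemma geo_sum_le {r : ℝ} (h0 : 0 < r) (h1 : r < 1) (m : ℕ) :
    ∑ i ∈ Finset.range m, r ^ i ≤ 1 / (1 - r) := by
  have h := (summable_geometric_of_lt_one h0.le h1).sum_le_tsum (Finset.range m)
    (fun i _ => (pow_pos h0 i).le)
  rw [tsum_geometric_of_lt_one h0.le h1] at h
  simpa using h

lemma prod_bdd {r : ℝ} (h0 : 0 < r) (h1 : r < 1) {k : ℕ → ℕ} (hk : StrictMono k) (N : ℕ) :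
    ∏ i ∈ Finset.range N, (1 + r ^ (k i)) ≤ Real.exp (1 / (1 - r)) := by
  calc ∏ i ∈ Finset.range N, (1 + r ^ (k i)) ≤ ∏ i ∈ Finset.range N, Real.exp (r ^ i) := by
        apply Finset.prod_le_prod
        · intro i _; positivity
        · intro i _
          have h2 : r ^ (k i) ≤ r ^ i := pow_le_pow_of_le_one h0.le h1.le (hk.le_apply)
          have := Real.add_one_le_exp (r ^ i)
          linarith
    _ = Real.exp (∑ i ∈ Finset.range N, r ^ i) := by rw [Real.exp_sum]
    _ ≤ _ := Real.exp_le_exp.2 (geo_sum_le h0 h1 N)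

lemma prod_ge_one {r : ℝ} (h0 : 0 < r) (k : ℕ → ℕ) (N : ℕ) :
    1 ≤ ∏ i ∈ Finset.range N, (1 + r ^ (k i)) := by
  induction N with
  | zero => simp
  | succ N ih =>
    rw [Finset.prod_range_succ]
    have : 0 < r ^ k N := pow_pos h0 _
    nlinarith

lemma prod_tail {r : ℝ} (h0 : 0 < r) (h1 : r < 1) {k : ℕ → ℕ} (hk : StrictMono k) (N m : ℕ) :
    ∏ i ∈ Finset.range (N + m), (1 + r ^ (k i)) - ∏ i ∈ Finset.range N, (1 + r ^ (k i))
      ≤ Real.exp (1 / (1 - r)) * (r ^ (k N) * ∑ i ∈ Finset.range m, r ^ i) := by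
  induction m with
  | zero => simp
  | succ m ih =>
    rw [← add_assoc, Finset.prod_range_succ, Finset.sum_range_succ]
    have h2 := prod_bdd h0 h1 hk (N + m)
    have h3 : r ^ (k (N + m)) ≤ r ^ (k N) * r ^ m := by
      rw [← pow_add]
      apply pow_le_pow_of_le_one h0.le h1.le
      have : ∀ m, k N + m ≤ k (N + m) := by
        intro m
        induction m with
        | zero => simp
        | succ m ih => have := hk (Nat.lt_succ_self (N + m)); simp only [Nat.succ_eq_add_one, add_assoc] at this ⊢; omega
      exact this m
    have h4 : (∏ i ∈ Finset.range (N + m), (1 + r ^ (k i))) * r ^ (k (N + m))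
        ≤ Real.exp (1 / (1 - r)) * (r ^ (k N) * r ^ m) :=
      mul_le_mul h2 h3 (pow_pos h0 _).le (Real.exp_pos _).le
    nlinarith

lemma prod_lim {r : ℝ} (h0 : 0 < r) (h1 : r < 1) {k : ℕ → ℕ} (hk : StrictMono k) :
    ∃ L : ℝ, Tendsto (fun N => ∏ i ∈ Finset.range N, (1 + r ^ (k i))) atTop (nhds L) ∧
      (∀ N, ∏ i ∈ Finset.range N, (1 + r ^ (k i)) < L) ∧
      ∃ C : ℝ, ∀ N, L - ∏ i ∈ Finset.range N, (1 + r ^ (k i)) ≤ C * r ^ (k N) := by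
  set P : ℕ → ℝ := fun N => ∏ i ∈ Finset.range N, (1 + r ^ (k i)) with hP
  have hmono : StrictMono P := by
    apply strictMono_nat_of_lt_succ
    intro N
    simp only [hP, Finset.prod_range_succ]
    have h2 := prod_ge_one h0 k N
    have h3 : 0 < r ^ k N := pow_pos h0 _
    nlinarith
  have hb : BddAbove (Set.range P) := ⟨_, by rintro _ ⟨N, rfl⟩; exact prod_bdd h0 h1 hk N⟩
  refine ⟨⨆ N, P N, tendsto_atTop_ciSup hmono.monotone hb, ?_, ?_⟩
  · intro N
    exact (hmono (Nat.lt_succ_self N)).trans_le (le_ciSup hb _)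
  · refine ⟨Real.exp (1 / (1 - r)) * (1 / (1 - r)), fun N => ?_⟩
    rw [sub_le_iff_le_add]
    have h5 : ∀ m, P (N + m) ≤ Real.exp (1 / (1 - r)) * (1 / (1 - r)) * r ^ k N + P N := by
      intro m
      have h2 := prod_tail h0 h1 hk N m
      have h3 := geo_sum_le h0 h1 m
      have h4 : Real.exp (1 / (1 - r)) * (r ^ (k N) * ∑ i ∈ Finset.range m, r ^ i) ≤
          Real.exp (1 / (1 - r)) * (r ^ (k N) * (1 / (1 - r))) := by gcongr
      simp only [hP] at h2 ⊢
      linarith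
    apply ciSup_le
    intro M
    rcases le_total N M with h | h
    · obtain ⟨m, rfl⟩ := Nat.exists_eq_add_of_le h
      exact h5 m
    · exact (hmono.monotone h).trans (h5 0)

lemma prod_beta {β : ℂ} (hβ : 1 < ‖β‖) {k : ℕ → ℕ} (hk : StrictMono k) :
    ∃ C : ℝ, 0 < C ∧ ∀ N, ‖∏ i ∈ Finset.range N, (1 + β ^ (k i))‖
      ≤ C * ‖β‖ ^ (∑ i ∈ Finset.range N, k i) := by
  have hb0 : 0 < ‖β‖ := by linarith
  have h0 : 0 < ‖β‖⁻¹ := by positivity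
  have h1 : ‖β‖⁻¹ < 1 := inv_lt_one_of_one_lt₀ hβ
  refine ⟨_, Real.exp_pos (1 / (1 - ‖β‖⁻¹)), fun N => ?_⟩
  have h2 := prod_bdd h0 h1 hk N
  calc ‖∏ i ∈ Finset.range N, (1 + β ^ (k i))‖
      ≤ ∏ i ∈ Finset.range N, ((1 + ‖β‖⁻¹ ^ (k i)) * ‖β‖ ^ (k i)) := by
        rw [norm_prod]
        apply Finset.prod_le_prod
        · intro i _; positivity
        · intro i _
          have h3 : (1 + ‖β‖⁻¹ ^ (k i)) * ‖β‖ ^ (k i) = ‖β‖ ^ (k i) + 1 := by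
            rw [add_mul, ← mul_pow, inv_mul_cancel₀ hb0.ne']; simp
          rw [h3]
          refine (norm_add_le _ _).trans ?_
          simp [add_comm]
    _ = (∏ i ∈ Finset.range N, (1 + ‖β‖⁻¹ ^ (k i))) * ‖β‖ ^ (∑ i ∈ Finset.range N, k i) := by
        rw [Finset.prod_mul_distrib, Finset.prod_pow_eq_pow_sum]
    _ ≤ _ := by gcongr

lemma poly_bd (q : ℤ[X]) : ∃ C : ℝ, 0 < C ∧ ∀ z : ℂ, ∀ R : ℝ, 1 ≤ R → ‖z‖ ≤ R →
    ‖aeval z q‖ ≤ C * R ^ q.natDegree := by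
  refine ⟨1 + ∑ i ∈ Finset.range (q.natDegree + 1), |(q.coeff i : ℝ)|, by positivity, ?_⟩
  intro z R hR hz
  rw [Polynomial.aeval_eq_sum_range]
  have : ∑ i ∈ Finset.range (q.natDegree + 1), ‖q.coeff i • z ^ i‖ ≤
      ∑ i ∈ Finset.range (q.natDegree + 1), |(q.coeff i : ℝ)| * R ^ q.natDegree := by
    apply Finset.sum_le_sum
    intro i hi
    have h1 : ‖q.coeff i • z ^ i‖ = |(q.coeff i : ℝ)| * ‖z‖ ^ i := by
      rw [zsmul_eq_mul, norm_mul, norm_pow, Complex.norm_intCast]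
    rw [h1]
    apply mul_le_mul_of_nonneg_left _ (abs_nonneg _)
    calc ‖z‖ ^ i ≤ R ^ i := by gcongr
      _ ≤ R ^ q.natDegree := pow_le_pow_right₀ hR (by simpa [Nat.lt_succ_iff] using hi)
  refine (norm_sum_le _ _).trans (this.trans ?_)
  rw [← Finset.sum_mul]
  have : 0 ≤ R ^ q.natDegree := by positivity
  nlinarith

lemma poly_lip (q : ℤ[X]) (L M : ℝ) (hq : aeval L q = 0) : ∃ C : ℝ, 0 < C ∧ ∀ x : ℝ, |x| ≤ M →
    |aeval x q| ≤ C * |L - x| := by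
  obtain ⟨s, hs⟩ : ∃ s : ℝ[X], q.map (Int.castRingHom ℝ) = (X - C L) * s := by
    have : (q.map (Int.castRingHom ℝ)).IsRoot L := by
      rw [IsRoot, eval_map]; exact hq
    exact dvd_iff_isRoot.2 this
  obtain ⟨B, hB⟩ := (isCompact_Icc (a := -M) (b := M)).exists_bound_of_continuousOn
    (f := fun x => s.eval x) s.continuous.continuousOn
  refine ⟨|B| + 1, by positivity, fun x hx => ?_⟩
  have e : aeval x q = (x - L) * s.eval x := by
    have := congrArg (eval x) hs
    rw [eval_map] at this
    simpa [aeval_def] using this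
  rw [e, abs_mul, abs_sub_comm, mul_comm]
  have := hB x (abs_le.1 hx)
  rw [Real.norm_eq_abs] at this
  have h3 := le_abs_self B
  gcongr
  linarith

/-- Liouville type bound. -/
lemma liou {α : ℝ} (h0 : 0 < α) (h1 : α < 1) {β : ℂ} (hβ : ‖β‖ ^ 2 * α = 1)
    (hn : ∀ p : ℤ[X], aeval α p ≠ 0 → 1 ≤ |aeval α p| * ‖aeval β p‖ ^ 2)
    {k : ℕ → ℕ} (hk : StrictMono k) (hk1 : ∀ i, 1 ≤ k i) {L : ℝ}
    (hlt : ∀ N, ∏ i ∈ Finset.range N, (1 + α ^ (k i)) < L)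
    {C0 : ℝ} (hC0 : ∀ N, L - ∏ i ∈ Finset.range N, (1 + α ^ (k i)) ≤ C0 * α ^ (k N))
    (hlim : Tendsto (fun N => ∏ i ∈ Finset.range N, (1 + α ^ (k i))) atTop (nhds L))
    (halg : IsAlgebraic ℚ L) :
    ∃ (C : ℝ) (N0 : ℕ), 1 ≤ C ∧ ∀ N, N0 ≤ N →
      ((∑ i ∈ Finset.range (N + 1), k i : ℕ) : ℝ) ≤ C * ((∑ i ∈ Finset.range N, k i : ℕ) : ℝ) := by
  have halg' : IsAlgebraic ℤ L := (IsFractionRing.isAlgebraic_iff ℤ ℚ ℝ).2 halg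
  obtain ⟨q, hq0, hq⟩ := halg'
  set d := q.natDegree
  have hb1 : 1 < ‖β‖ := by
    by_contra h
    have h2 : ‖β‖ ^ 2 ≤ 1 := pow_le_one₀ (norm_nonneg _) (not_lt.1 h)
    nlinarith
  obtain ⟨C1, hC1, hβP⟩ := prod_beta hb1 hk
  obtain ⟨C2, hC2, hq2⟩ := poly_bd q
  obtain ⟨C3, hC3, hq3⟩ := poly_lip q L L hq
  set P : ℕ → ℝ := fun N => ∏ i ∈ Finset.range N, (1 + α ^ (k i)) with hP
  have hP1 : ∀ N, 1 ≤ P N := fun N => prod_ge_one h0 k N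
  have hne : ∀ᶠ N in atTop, aeval (P N) q ≠ 0 := by
    have hfin : {x : ℝ | aeval x q = 0}.Finite := by
      have hq' : q.map (Int.castRingHom ℝ) ≠ 0 := by
        rw [Ne, Polynomial.map_eq_zero_iff (Int.cast_injective)]; exact hq0
      apply ((q.map (Int.castRingHom ℝ)).roots.toFinset.finite_toSet).subset
      intro x hx
      simp only [Finset.mem_coe, Multiset.mem_toFinset]
      rw [Polynomial.mem_roots hq', IsRoot, eval_map]
      exact hx
    have hT : Tendsto P atTop (nhdsWithin L {L}ᶜ) := by
      apply tendsto_nhdsWithin_iff.2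
      exact ⟨hlim, Eventually.of_forall fun N => (hlt N).ne⟩
    have hev : ∀ᶠ x in nhdsWithin L {L}ᶜ, x ∉ {x : ℝ | aeval x q = 0} := by
      have : ({x : ℝ | aeval x q = 0} \ {L}).Finite := hfin.subset Set.sdiff_subset
      have h2 : ({x : ℝ | aeval x q = 0} \ {L})ᶜ ∈ nhds L :=
        this.isClosed.isOpen_compl.mem_nhds (by simp)
      filter_upwards [mem_nhdsWithin_of_mem_nhds h2, self_mem_nhdsWithin] with x hx hx2 hx3
      exact hx ⟨hx3, hx2⟩
    exact hT.eventually hev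
  obtain ⟨N0, hN0⟩ := eventually_atTop.1 hne
  -- main inequality
  have hC0pos : 0 < C0 := by
    have h2 := hC0 0
    have h3 := hlt 0
    have h4 : 0 < α ^ k 0 := pow_pos h0 _
    by_contra h
    nlinarith
  set C4 := max C1 1 with hC4
  set K : ℝ := C3 * C0 * (C2 * C4 ^ d) ^ 2 with hK
  have hKpos : 0 < K := by positivity
  have main : ∀ N, N0 ≤ N → 1 ≤ K * α ^ ((k N : ℝ) - d * (∑ i ∈ Finset.range N, k i : ℕ)) := by
    intro N hN
    set H := ∑ i ∈ Finset.range N, k i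
    set p : ℤ[X] := aeval (∏ i ∈ Finset.range N, (1 + X ^ (k i)) : ℤ[X]) q with hp
    have ea : aeval α p = aeval (P N) q := by
      rw [hp, ← Polynomial.aeval_algHom_apply]
      simp [hP, map_prod]
    have eb : aeval β p = aeval (∏ i ∈ Finset.range N, (1 + β ^ (k i))) q := by
      rw [hp, ← Polynomial.aeval_algHom_apply]
      simp [map_prod]
    have h2 := hn p (by rw [ea]; exact hN0 N hN)
    rw [ea, eb] at h2
    have h3 : |aeval (P N) q| ≤ C3 * (C0 * α ^ k N) := by
      refine (hq3 (P N) ?_).trans ?_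
      · rw [abs_of_pos (by linarith [hP1 N])]; exact (hlt N).le
      · rw [abs_of_pos (sub_pos.2 (hlt N))]
        gcongr
        exact hC0 N
    have h4 : ‖aeval (∏ i ∈ Finset.range N, (1 + β ^ (k i))) q‖ ≤ C2 * (C4 * ‖β‖ ^ H) ^ d := by
      apply hq2
      · have : 1 ≤ ‖β‖ ^ H := one_le_pow₀ hb1.le
        have : (1:ℝ) ≤ C4 := le_max_right _ _
        nlinarith
      · refine (hβP N).trans ?_
        gcongr
        exact le_max_left _ _
    have h5 : 1 ≤ C3 * (C0 * α ^ k N) * (C2 * (C4 * ‖β‖ ^ H) ^ d) ^ 2 := by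
      refine h2.trans ?_
      gcongr
    have h6 : α ^ ((k N : ℝ) - d * (H : ℕ)) = α ^ k N * (‖β‖ ^ 2) ^ (H * d) := by
      have : ‖β‖ ^ 2 = α⁻¹ := eq_inv_of_mul_eq_one_left hβ
      rw [this, Real.rpow_sub h0, Real.rpow_natCast]
      have : (d : ℝ) * (H : ℝ) = ((H * d : ℕ) : ℝ) := by push_cast; ring
      rw [this, Real.rpow_natCast, inv_pow]
      rfl
    rw [h6]
    refine h5.trans (le_of_eq ?_)
    rw [hK]; ring
  have hlog : Real.log α < 0 := Real.log_neg h0 h1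
  refine ⟨1 + d + |Real.log K / Real.log α|, max N0 1, by
    have := abs_nonneg (Real.log K / Real.log α); have : (0:ℝ) ≤ d := by positivity
    linarith, fun N hN => ?_⟩
  have h2 := main N ((le_max_left _ _).trans hN)
  have h3 := Real.log_le_log one_pos h2
  rw [Real.log_one, Real.log_mul hKpos.ne' (Real.rpow_pos_of_pos h0 _).ne', Real.log_rpow h0] at h3
  set H := ∑ i ∈ Finset.range N, k i with hH
  have hH1 : 1 ≤ H := by
    have hN1 : 1 ≤ N := (le_max_right _ _).trans hN
    have := Finset.single_le_sum (f := k) (s := Finset.range N) (fun i _ => Nat.zero_le _)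
      (Finset.mem_range.2 hN1)
    exact (hk1 0).trans this
  have hH1' : (1 : ℝ) ≤ H := by exact_mod_cast hH1
  have h4 : (k N : ℝ) - d * H ≤ - (Real.log K / Real.log α) := by
    rw [← neg_div, le_div_iff_of_neg hlog]
    linarith
  have h5 : -(Real.log K / Real.log α) ≤ |Real.log K / Real.log α| := neg_le_abs _
  rw [Finset.sum_range_succ]
  push_cast
  have h6 : |Real.log K / Real.log α| ≤ |Real.log K / Real.log α| * H :=
    le_mul_of_one_le_right (abs_nonneg _) hH1'
  have h7 : ((∑ x ∈ Finset.range N, (k x : ℝ))) = (H : ℝ) := by rw [hH]; push_cast; rfl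
  rw [h7]
  linarith

lemma windows {H : ℕ → ℝ} (hH : ∀ n, 1 ≤ n → 0 < H n) {C : ℝ} {N0 : ℕ} (hC : 1 ≤ C)
    (hup : ∀ N, N0 ≤ N → H (N + 1) ≤ C * H N)
    (hgrow : ∃ᶠ n in atTop, ((8 : ℝ) / 3) ^ n ≤ H n) (t : ℕ) :
    ∃ n, t ≤ n ∧ 1 ≤ n ∧ ∀ J, J ≤ t → ((5 : ℝ) / 2) ^ J * H n ≤ H (n + J) := by
  by_contra hcon
  push Not at hcon
  set n0 := max (max t 1) N0 with hn0
  set y : ℕ → ℝ := fun n => H n / (5 / 2 : ℝ) ^ n with hy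
  have ht0 : t ≤ n0 := (le_max_left _ _).trans (le_max_left _ _)
  have h10 : 1 ≤ n0 := (le_max_right _ _).trans (le_max_left _ _)
  have hN00 : N0 ≤ n0 := le_max_right _ _
  have hypos : ∀ n, n0 ≤ n → 0 < y n := fun n hn => by
    have := hH n (h10.trans hn)
    simp only [hy]; positivity
  have hstep : ∀ n, n0 ≤ n → ∃ J, 1 ≤ J ∧ J ≤ t ∧ y (n + J) ≤ y n := by
    intro n hn
    obtain ⟨J, hJ, hlt⟩ := hcon n (ht0.trans hn) (h10.trans hn)
    refine ⟨J, ?_, hJ, ?_⟩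
    · by_contra h
      have : J = 0 := by omega
      subst this
      simp at hlt
    · simp only [hy]
      rw [div_le_div_iff₀ (by positivity) (by positivity), pow_add]
      have : (0:ℝ) < (5/2) ^ n := by positivity
      nlinarith
  have hchain : ∀ m, ∃ m', m' ≤ n0 + m ∧ n0 ≤ m' ∧ n0 + m ≤ m' + t ∧ y m' ≤ y n0 := by
    intro m
    induction m with
    | zero => exact ⟨n0, by omega, by omega, by omega, le_rfl⟩
    | succ m ih =>
      obtain ⟨m', h1, h2, h3, h4⟩ := ih
      by_cases h5 : n0 + (m + 1) ≤ m' + t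
      · exact ⟨m', by omega, h2, h5, h4⟩
      · obtain ⟨J, hJ1, hJt, hJy⟩ := hstep m' h2
        exact ⟨m' + J, by omega, by omega, by omega, hJy.trans h4⟩
  have hyC : ∀ n, n0 ≤ n → ∀ i, y (n + i) ≤ C ^ i * y n := by
    intro n hn i
    induction i with
    | zero => simp
    | succ i ih =>
      have h1 : y (n + i + 1) ≤ C * y (n + i) := by
        have h2 := hup (n + i) (by omega)
        have h3 := hH (n + i) (by omega)
        simp only [hy]
        rw [← mul_div_assoc, pow_succ, div_le_div_iff₀ (by positivity) (by positivity)]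
        have : (0:ℝ) < (5/2) ^ (n+i) := by positivity
        have h4 : 0 < C * H (n + i) := by positivity
        nlinarith [mul_pos this h4]
      rw [← add_assoc, pow_succ]
      calc y (n + i + 1) ≤ C * y (n + i) := h1
        _ ≤ C * (C ^ i * y n) := by gcongr
        _ = _ := by ring
  have hbd : ∀ n, n0 ≤ n → y n ≤ C ^ t * y n0 := by
    intro n hn
    obtain ⟨m, rfl⟩ := Nat.exists_eq_add_of_le hn
    obtain ⟨m', h1, h2, h3, h4⟩ := hchain m
    obtain ⟨i, hi⟩ := Nat.exists_eq_add_of_le h1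
    rw [hi]
    have h5 := hyC m' h2 i
    have h6 : C ^ i ≤ C ^ t := pow_le_pow_right₀ hC (by omega)
    have h7 := hypos m' h2
    have h8 : 0 < C ^ t := by positivity
    calc y (m' + i) ≤ C ^ i * y m' := h5
      _ ≤ C ^ t * y n0 := by gcongr
  have hT : Tendsto (fun n : ℕ => ((16 : ℝ) / 15) ^ n) atTop atTop :=
    tendsto_pow_atTop_atTop_of_one_lt (by norm_num)
  obtain ⟨n, hn1, hn2, hn3⟩ := (hgrow.and_eventually
    ((hT.eventually_gt_atTop (C ^ t * y n0)).and (eventually_ge_atTop n0))).exists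
  have h9 := hbd n hn3
  have h10' : ((16 : ℝ) / 15) ^ n ≤ y n := by
    simp only [hy]
    rw [le_div_iff₀ (by positivity), ← mul_pow]
    norm_num
    exact hn1
  linarith

end RealPart


section HyperPart
open Polynomial Hyperreal

structure Dat where
  α : ℝ
  hα0 : 0 < α
  hα1 : α < 1
  β : ℂ
  hβ : ‖β‖ ^ 2 * α = 1
  hnorm : ∀ p : ℤ[X], aeval α p ≠ 0 → 1 ≤ |aeval α p| * ‖aeval β p‖ ^ 2
  k : ℕ → ℕ
  hk : StrictMono k
  hk1 : ∀ i, 1 ≤ k i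
  L : ℝ
  C0 : ℝ
  hL : ∀ N, L - ∏ i ∈ Finset.range N, (1 + α ^ (k i)) ≤ C0 * α ^ (k N)
  hlt : ∀ N, ∏ i ∈ Finset.range N, (1 + α ^ (k i)) < L
  hP1 : ∀ N, 1 ≤ ∏ i ∈ Finset.range N, (1 + α ^ (k i))
  C1 : ℝ
  hPβ : ∀ N, ‖∏ i ∈ Finset.range N, (1 + β ^ (k i))‖ ≤ C1 * ‖β‖ ^ (∑ i ∈ Finset.range N, k i)
  nt : ℕ → ℕ
  hnt : ∀ t, t ≤ nt t
  hwin : ∀ t J, J ≤ t → ((5 : ℝ) / 2) ^ J * ((∑ i ∈ Finset.range (nt t), k i : ℕ) : ℝ)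
    ≤ ((∑ i ∈ Finset.range (nt t + J), k i : ℕ) : ℝ)
  C2 : ℝ
  hC2 : 1 ≤ C2
  N0 : ℕ
  hup : ∀ N, N0 ≤ N →
      ((∑ i ∈ Finset.range (N + 1), k i : ℕ) : ℝ) ≤ C2 * ((∑ i ∈ Finset.range N, k i : ℕ) : ℝ)

lemma hyp_abs (f : ℕ → ℝ) : |ofSeq f| = ofSeq (fun t => |f t|) := by
  rcases le_total 0 (ofSeq f) with h | h
  · rw [abs_of_nonneg h]
    refine le_antisymm (ofSeq_le_ofSeq.2 ?_) (ofSeq_le_ofSeq.2 ?_)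
    · exact Eventually.of_forall fun t => le_abs_self _
    · have h' : ofSeq (fun _ => 0) ≤ ofSeq f := h
      filter_upwards [ofSeq_le_ofSeq.1 h'] with t ht
      rw [abs_of_nonneg ht]
  · rw [abs_of_nonpos h]
    have e : - ofSeq f = ofSeq (fun t => - f t) := rfl
    rw [e]
    refine le_antisymm (ofSeq_le_ofSeq.2 ?_) (ofSeq_le_ofSeq.2 ?_)
    · exact Eventually.of_forall fun t => neg_le_abs _
    · have h' : ofSeq f ≤ ofSeq (fun _ => 0) := h
      filter_upwards [ofSeq_le_ofSeq.1 h'] with t ht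
      rw [abs_of_nonpos ht]

lemma hyp_eq {f g : ℕ → ℝ} : ofSeq f = ofSeq g ↔ ∀ᶠ t in hyperfilter ℕ, f t = g t :=
  Germ.coe_eq

lemma hyp_ge {p : ℕ → Prop} (N : ℕ) (h : ∀ t, N ≤ t → p t) : ∀ᶠ t in hyperfilter ℕ, p t :=
  Filter.Eventually.filter_mono Nat.hyperfilter_le_atTop (eventually_atTop.2 ⟨N, h⟩)

lemma hyp_sum {ι : Type*} (s : Finset ι) (f : ι → ℕ → ℝ) :
    ∑ i ∈ s, ofSeq (f i) = ofSeq (fun t => ∑ i ∈ s, f i t) := by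
  classical
  induction s using Finset.induction_on with
  | empty => simp; rfl
  | insert a s ha ih => simp only [Finset.sum_insert ha, ih]; rfl

lemma hyp_prod {ι : Type*} (s : Finset ι) (f : ι → ℕ → ℝ) :
    ∏ i ∈ s, ofSeq (f i) = ofSeq (fun t => ∏ i ∈ s, f i t) := by
  classical
  induction s using Finset.induction_on with
  | empty => simp; rfl
  | insert a s ha ih => simp only [Finset.prod_insert ha, ih]; rfl

namespace Dat
variable (D : Dat)

noncomputable def E (x : Hyperreal) : Hyperreal := Germ.map (fun r => D.α ^ r) x

lemma E_ofSeq (f : ℕ → ℝ) : D.E (ofSeq f) = ofSeq (fun t => D.α ^ f t) := rfl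

lemma E_add (x y : Hyperreal) : D.E (x + y) = D.E x * D.E y := by
  obtain ⟨f, rfl⟩ := ofSeq_surjective x
  obtain ⟨g, rfl⟩ := ofSeq_surjective y
  have e : ofSeq f + ofSeq g = ofSeq (fun t => f t + g t) := rfl
  rw [e, E_ofSeq]
  simp only [Real.rpow_add D.hα0]
  rfl

lemma E_coe (r : ℝ) : D.E (r : Hyperreal) = ((D.α ^ r : ℝ) : Hyperreal) := rfl

lemma E_zero : D.E 0 = 1 := by
  have := D.E_coe 0
  simpa using this

lemma E_pos (x : Hyperreal) : 0 < D.E x := by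
  obtain ⟨f, rfl⟩ := ofSeq_surjective x
  have : ofSeq (fun _ => 0) < D.E (ofSeq f) := by
    rw [E_ofSeq]
    exact ofSeq_lt_ofSeq.2 (Eventually.of_forall fun t => Real.rpow_pos_of_pos D.hα0 _)
  exact this

lemma E_le {x y : Hyperreal} (h : x ≤ y) : D.E y ≤ D.E x := by
  obtain ⟨f, rfl⟩ := ofSeq_surjective x
  obtain ⟨g, rfl⟩ := ofSeq_surjective y
  rw [E_ofSeq, E_ofSeq]
  apply ofSeq_le_ofSeq.2
  filter_upwards [ofSeq_le_ofSeq.1 h] with t ht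
  exact Real.rpow_le_rpow_of_exponent_ge D.hα0 D.hα1.le ht

lemma E_le_one {x : Hyperreal} (h : 0 ≤ x) : D.E x ≤ 1 := by
  have := D.E_le h
  rwa [E_zero] at this

lemma E_nsmul (n : ℕ) (x : Hyperreal) : D.E (n * x) = D.E x ^ n := by
  induction n with
  | zero => simp [E_zero]
  | succ n ih => push_cast; rw [add_mul, E_add, ih, one_mul, pow_succ]

lemma E_small {x : Hyperreal} (h : ∀ r : ℝ, (r : Hyperreal) < x) {e : ℝ} (he : 0 < e) :
    D.E x < (e : Hyperreal) := by
  have h1 := h (Real.log (e / 2) / Real.log D.α)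
  have h2 := D.E_le h1.le
  rw [E_coe] at h2
  refine h2.trans_lt (coe_lt_coe.2 ?_)
  have hl : Real.log D.α ≠ 0 := (Real.log_neg D.hα0 D.hα1).ne
  rw [Real.rpow_def_of_pos D.hα0, mul_div_cancel₀ _ hl, Real.exp_log (by positivity)]
  linarith

noncomputable def HN (N : ℕ) : ℕ := ∑ i ∈ Finset.range N, D.k i
noncomputable def PN (N : ℕ) : ℝ := ∏ i ∈ Finset.range N, (1 + D.α ^ (D.k i))
noncomputable def T : Hyperreal := ofSeq (fun t => (D.HN (D.nt t) : ℝ))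
noncomputable def kk (i : ℕ) : Hyperreal := ofSeq (fun t => (D.k (D.nt t + i) : ℝ))
noncomputable def ξ : Hyperreal := ofSeq (fun t => D.PN (D.nt t))
noncomputable def g : Hyperreal := (D.L : Hyperreal) / D.ξ
noncomputable def PJ (j : ℕ) : Hyperreal := ∏ i ∈ Finset.range j, (1 + D.E (D.kk i))

lemma HN_ge (N : ℕ) : N ≤ D.HN N := by
  unfold HN
  calc N = ∑ i ∈ Finset.range N, 1 := by simp
    _ ≤ _ := Finset.sum_le_sum fun i _ => D.hk1 i

lemma T_inf (r : ℝ) : (r : Hyperreal) < D.T := by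
  have : (r : Hyperreal) = ofSeq (fun _ => r) := rfl
  rw [this]
  apply ofSeq_lt_ofSeq.2
  obtain ⟨n, hn⟩ := exists_nat_gt r
  apply hyp_ge n
  intro t ht
  have : n ≤ D.HN (D.nt t) := ht.trans ((D.hnt t).trans (D.HN_ge _))
  have : (n : ℝ) ≤ D.HN (D.nt t) := by exact_mod_cast this
  linarith

lemma T_pos : 0 < D.T := by simpa using D.T_inf 0

lemma HN_add (n j : ℕ) : D.HN (n + j) = D.HN n + ∑ i ∈ Finset.range j, D.k (n + i) := by
  unfold HN
  exact Finset.sum_range_add _ _ _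

lemma sum_kk (j : ℕ) : ((5 / 2 : ℝ) : Hyperreal) ^ j * D.T ≤ D.T + ∑ i ∈ Finset.range j, D.kk i := by
  unfold kk
  rw [hyp_sum]
  have e1 : D.T + ofSeq (fun t => ∑ i ∈ Finset.range j, (D.k (D.nt t + i) : ℝ))
     = ofSeq (fun t => (D.HN (D.nt t) : ℝ) + ∑ i ∈ Finset.range j, (D.k (D.nt t + i) : ℝ)) := rfl
  have e2 : ((5 / 2 : ℝ) : Hyperreal) ^ j * D.T = ofSeq (fun t => (5/2) ^ j * (D.HN (D.nt t) : ℝ)) := rfl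
  rw [e1, e2]
  apply ofSeq_le_ofSeq.2
  apply hyp_ge j
  intro t ht
  have h1 := D.hwin t j ht
  have h2 := D.HN_add (D.nt t) j
  have h3 : ((∑ i ∈ Finset.range (D.nt t + j), D.k i : ℕ) : ℝ) = D.HN (D.nt t + j) := rfl
  have h4 : ((∑ i ∈ Finset.range (D.nt t), D.k i : ℕ) : ℝ) = D.HN (D.nt t) := rfl
  rw [h3, h4, h2] at h1
  push_cast at h1
  exact h1

lemma kk_mono {i j : ℕ} (h : i ≤ j) : D.kk i ≤ D.kk j := by
  apply ofSeq_le_ofSeq.2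
  refine Eventually.of_forall fun t => ?_
  have : D.k (D.nt t + i) ≤ D.k (D.nt t + j) := D.hk.monotone (by omega)
  exact_mod_cast this

lemma aux_pow (j : ℕ) (hj : 1 ≤ j) : 1 + (j : ℝ) ^ 3 / 4 ≤ (5 / 2 : ℝ) ^ j := by
  rcases (by omega : j = 1 ∨ j = 2 ∨ 3 ≤ j) with h | h | h
  · subst h; norm_num
  · subst h; norm_num
  · induction j, h using Nat.le_induction with
    | base => norm_num
    | succ n hn ih =>
      have h1 := ih (by omega)
      have h2 : (3 : ℝ) ≤ n := by exact_mod_cast hn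
      rw [pow_succ (5/2 : ℝ)]
      push_cast
      nlinarith [mul_nonneg (sub_nonneg.2 h2) (sub_nonneg.2 h2), mul_nonneg (mul_nonneg (sub_nonneg.2 h2) (sub_nonneg.2 h2)) (sub_nonneg.2 h2)]

lemma kk_low (i : ℕ) : (((i + 1 : ℝ) ^ 2 / 4 : ℝ) : Hyperreal) * D.T ≤ D.kk i := by
  have h1 := D.sum_kk (i + 1)
  have h2 : ∑ l ∈ Finset.range (i + 1), D.kk l ≤ ((i + 1 : ℝ) : Hyperreal) * D.kk i := by
    have := Finset.sum_le_card_nsmul (Finset.range (i + 1)) D.kk (D.kk i)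
      (fun l hl => D.kk_mono (by simpa [Nat.lt_succ_iff] using hl))
    rw [Finset.card_range, nsmul_eq_mul] at this
    have e : ((i + 1 : ℕ) : Hyperreal) = ((i + 1 : ℝ) : Hyperreal) := by push_cast; rfl
    rwa [e] at this
  have h3 : ((1 + ((i + 1 : ℕ) : ℝ) ^ 3 / 4 : ℝ) : Hyperreal) ≤ ((5 / 2 : ℝ) : Hyperreal) ^ (i + 1) := by
    have := coe_le_coe.2 (aux_pow (i + 1) (by omega))
    exact this
  have h4 := mul_le_mul_of_nonneg_right h3 D.T_pos.le
  have hp : (0 : Hyperreal) < ((i + 1 : ℝ) : Hyperreal) := coe_pos.2 (by positivity)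
  have h5 : ((1 + ((i + 1 : ℕ) : ℝ) ^ 3 / 4 : ℝ) : Hyperreal) =
      1 + ((i + 1 : ℝ) : Hyperreal) * (((i + 1 : ℝ) ^ 2 / 4 : ℝ) : Hyperreal) := by
    rw [← Hyperreal.coe_mul, ← Hyperreal.coe_one, ← Hyperreal.coe_add]; congr 1; push_cast; ring
  rw [h5] at h4
  have h6 : ((i + 1 : ℝ) : Hyperreal) * ((((i + 1 : ℝ) ^ 2 / 4 : ℝ) : Hyperreal) * D.T)
      ≤ ((i + 1 : ℝ) : Hyperreal) * D.kk i := by linarith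
  exact le_of_mul_le_mul_left h6 hp

lemma kk_T (i : ℕ) : D.T ≤ D.kk i := by
  have h1 := D.sum_kk 1
  simp only [pow_one, Finset.sum_range_one] at h1
  have h2 : ((5 / 2 : ℝ) : Hyperreal) = 5 / 2 := by simp
  have h3 := D.T_pos
  have h4 := D.kk_mono (Nat.zero_le i)
  rw [h2] at h1
  linarith

lemma kk_up (i : ℕ) : ∃ C : ℝ, D.kk i ≤ (C : Hyperreal) * D.T := by
  refine ⟨D.C2 ^ (i + 1), ?_⟩
  have e : ((D.C2 ^ (i + 1) : ℝ) : Hyperreal) * D.T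
    = ofSeq (fun t => D.C2 ^ (i + 1) * (D.HN (D.nt t) : ℝ)) := rfl
  rw [e]
  apply ofSeq_le_ofSeq.2
  apply hyp_ge D.N0
  intro t ht
  have h1 : ∀ j, (D.HN (D.nt t + j) : ℝ) ≤ D.C2 ^ j * D.HN (D.nt t) := by
    intro j
    induction j with
    | zero => simp
    | succ j ih =>
      have h2 := D.hup (D.nt t + j) ((ht.trans (D.hnt t)).trans (by omega))
      have h3 : (D.HN (D.nt t + j + 1) : ℝ) ≤ D.C2 * D.HN (D.nt t + j) := h2
      have h4 := D.hC2
      rw [← add_assoc]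
      calc (D.HN (D.nt t + j + 1) : ℝ) ≤ D.C2 * D.HN (D.nt t + j) := h3
        _ ≤ D.C2 * (D.C2 ^ j * D.HN (D.nt t)) := by gcongr
        _ = _ := by ring
  refine le_trans ?_ (h1 (i + 1))
  have : D.k (D.nt t + i) ≤ D.HN (D.nt t + (i + 1)) := by
    rw [← add_assoc, HN, Finset.sum_range_succ]; omega
  exact_mod_cast this

lemma E_kk (i : ℕ) : D.E (D.kk i) = ofSeq (fun t => D.α ^ (D.k (D.nt t + i))) := by
  unfold kk
  rw [E_ofSeq]
  simp only [Real.rpow_natCast]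

lemma PJ_eq (j : ℕ) : D.ξ * D.PJ j = ofSeq (fun t => D.PN (D.nt t + j)) := by
  have h1 : ∀ i, 1 + D.E (D.kk i) = ofSeq (fun t => 1 + D.α ^ (D.k (D.nt t + i))) := by
    intro i; rw [E_kk]; rfl
  unfold PJ
  simp only [h1]
  rw [hyp_prod]
  have : D.ξ * ofSeq (fun t => ∏ i ∈ Finset.range j, (1 + D.α ^ D.k (D.nt t + i))) =
    ofSeq (fun t => D.PN (D.nt t) * ∏ i ∈ Finset.range j, (1 + D.α ^ D.k (D.nt t + i))) := rfl
  rw [this]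
  congr 1
  funext t
  unfold PN
  rw [Finset.prod_range_add]

lemma one_le_ξ : 1 ≤ D.ξ := by
  have : ofSeq (fun _ => 1) ≤ D.ξ := ofSeq_le_ofSeq.2 (Eventually.of_forall fun t => D.hP1 _)
  exact this

lemma ξ_le : D.ξ ≤ D.L := by
  have : D.ξ ≤ ofSeq (fun _ => D.L) := ofSeq_le_ofSeq.2 (Eventually.of_forall fun t => (D.hlt _).le)
  exact this

lemma ξ_pos : 0 < D.ξ := zero_lt_one.trans_le D.one_le_ξ

lemma one_le_L : 1 ≤ D.L := (D.hP1 0).trans (D.hlt 0).le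

lemma one_le_g : 1 ≤ D.g := by
  unfold g
  rw [le_div_iff₀ D.ξ_pos, one_mul]
  exact D.ξ_le

lemma g_le : D.g ≤ D.L := by
  unfold g
  rw [div_le_iff₀ D.ξ_pos]
  have h1 := D.one_le_ξ
  have h2 : (0 : Hyperreal) < D.L := coe_pos.2 (by linarith [D.one_le_L])
  nlinarith

lemma one_le_PJ (j : ℕ) : 1 ≤ D.PJ j := by
  unfold PJ
  induction j with
  | zero => simp
  | succ j ih =>
    rw [Finset.prod_range_succ]
    have := D.E_pos (D.kk j)
    nlinarith

lemma g_sub (j : ℕ) : |D.g - D.PJ j| ≤ (D.C0 : Hyperreal) * D.E (D.kk j) := by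
  have h1 : D.ξ * (D.g - D.PJ j) = ofSeq (fun t => D.L - D.PN (D.nt t + j)) := by
    rw [mul_sub, PJ_eq]
    unfold g
    rw [mul_div_cancel₀ _ D.ξ_pos.ne']
    rfl
  have h2 : 0 ≤ D.ξ * (D.g - D.PJ j) := by
    rw [h1]
    have : ofSeq (fun _ => 0) ≤ ofSeq (fun t => D.L - D.PN (D.nt t + j)) :=
      ofSeq_le_ofSeq.2 (Eventually.of_forall fun t => (sub_pos.2 (D.hlt _)).le)
    exact this
  have h3 : D.ξ * (D.g - D.PJ j) ≤ (D.C0 : Hyperreal) * D.E (D.kk j) := by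
    rw [h1, E_kk]
    have : (D.C0 : Hyperreal) * ofSeq (fun t => D.α ^ (D.k (D.nt t + j)))
      = ofSeq (fun t => D.C0 * D.α ^ (D.k (D.nt t + j))) := rfl
    rw [this]
    exact ofSeq_le_ofSeq.2 (Eventually.of_forall fun t => D.hL _)
  have h4 : 0 ≤ D.g - D.PJ j := nonneg_of_mul_nonneg_right h2 D.ξ_pos
  rw [abs_of_nonneg h4]
  have := D.one_le_ξ
  nlinarith

end Dat
end HyperPart


section HyperPart
open Polynomial Hyperreal

namespace Dat
variable (D : Dat)

def O (v : Hyperreal) : Submodule ℚ Hyperreal where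
  carrier := {x | ∃ C : ℝ, |x| ≤ (C : Hyperreal) * D.E v}
  zero_mem' := ⟨0, by simp⟩
  add_mem' := by
    rintro x y ⟨C, hC⟩ ⟨C', hC'⟩
    refine ⟨C + C', (abs_add_le _ _).trans ?_⟩
    rw [Hyperreal.coe_add, add_mul]
    exact add_le_add hC hC'
  smul_mem' := by
    rintro q x ⟨C, hC⟩
    refine ⟨|(q : ℝ)| * C, ?_⟩
    have e : ((|(q : ℝ)| : ℝ) : Hyperreal) = |(q : Hyperreal)| := by
      rw [Hyperreal.coe_abs]; congr 1
      exact map_ratCast (coeRingHom : ℝ →+* Hyperreal) q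
    rw [Rat.smul_def, abs_mul, Hyperreal.coe_mul, e, mul_assoc]
    gcongr

lemma mem_O {v x : Hyperreal} : x ∈ D.O v ↔ ∃ C : ℝ, |x| ≤ (C : Hyperreal) * D.E v := Iff.rfl

lemma E_mem_O (v : Hyperreal) : D.E v ∈ D.O v := ⟨1, by simp [abs_of_pos (D.E_pos v)]⟩

lemma O_anti {v w : Hyperreal} (h : v ≤ w) : D.O w ≤ D.O v := by
  rintro x ⟨C, hC⟩
  refine ⟨|C|, hC.trans ?_⟩
  have h1 := D.E_le h
  have h2 : (C : Hyperreal) ≤ ((|C| : ℝ) : Hyperreal) := coe_le_coe.2 (le_abs_self C)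
  have h3 : (0 : Hyperreal) ≤ ((|C| : ℝ) : Hyperreal) := Hyperreal.coe_nonneg.2 (abs_nonneg C)
  exact mul_le_mul h2 h1 (D.E_pos _).le h3

lemma O_mul {v w x y : Hyperreal} (hx : x ∈ D.O v) (hy : y ∈ D.O w) : x * y ∈ D.O (v + w) := by
  obtain ⟨C, hC⟩ := hx
  obtain ⟨C', hC'⟩ := hy
  refine ⟨C * C', ?_⟩
  rw [abs_mul, E_add, Hyperreal.coe_mul]
  calc |x| * |y| ≤ (C * D.E v) * (C' * D.E w) :=
        mul_le_mul hC hC' (abs_nonneg _) ((abs_nonneg _).trans hC)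
    _ = _ := by ring

lemma O_mul_zero {v x y : Hyperreal} (hx : x ∈ D.O 0) (hy : y ∈ D.O v) : x * y ∈ D.O v := by
  have := D.O_mul hx hy
  rwa [zero_add] at this

lemma O_zero_of_le {x : Hyperreal} {C : ℝ} (h : |x| ≤ C) : x ∈ D.O 0 :=
  ⟨C, by rwa [E_zero, mul_one]⟩

lemma coe_O_zero (r : ℝ) : (r : Hyperreal) ∈ D.O 0 :=
  D.O_zero_of_le (C := |r|) (by rw [Hyperreal.coe_abs])

lemma pow_O_zero {x : Hyperreal} (h : x ∈ D.O 0) (n : ℕ) : x ^ n ∈ D.O 0 := by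
  induction n with
  | zero => simpa using D.coe_O_zero 1
  | succ n ih => rw [pow_succ]; exact D.O_mul_zero ih h

lemma g_O : D.g ∈ D.O 0 := D.O_zero_of_le (C := D.L) (by
  rw [abs_of_pos (zero_lt_one.trans_le D.one_le_g)]; exact D.g_le)

lemma PJ_O (j : ℕ) : D.PJ j ∈ D.O 0 := by
  have h : D.g - D.PJ j ∈ D.O (D.kk j) := ⟨D.C0, D.g_sub j⟩
  have h0 : 0 ≤ D.kk j := D.T_pos.le.trans (D.kk_T j)
  have := (D.O 0).sub_mem D.g_O (D.O_anti h0 h)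
  simpa using this

noncomputable def SS : AddSubmonoid Hyperreal := AddSubmonoid.closure (Set.range D.kk)

lemma kk_SS (i : ℕ) : D.kk i ∈ D.SS := AddSubmonoid.subset_closure ⟨i, rfl⟩

lemma SS_nonneg {e : Hyperreal} (he : e ∈ D.SS) : 0 ≤ e := by
  induction he using AddSubmonoid.closure_induction with
  | mem x hx => obtain ⟨i, rfl⟩ := hx; exact D.T_pos.le.trans (D.kk_T i)
  | zero => exact le_rfl
  | add x y _ _ hx hy => exact add_nonneg hx hy

lemma SS_nat {e : Hyperreal} (he : e ∈ D.SS) : ∃ s : ℕ → ℕ, e = ofSeq (fun t => (s t : ℝ)) := by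
  induction he using AddSubmonoid.closure_induction with
  | mem x hx => obtain ⟨i, rfl⟩ := hx; exact ⟨_, rfl⟩
  | zero => exact ⟨fun _ => 0, by simp; rfl⟩
  | add x y _ _ hx hy =>
    obtain ⟨s, rfl⟩ := hx
    obtain ⟨s', rfl⟩ := hy
    refine ⟨fun t => s t + s' t, ?_⟩
    push_cast
    rfl

lemma SS_up {e : Hyperreal} (he : e ∈ D.SS) : ∃ C : ℝ, e ≤ (C : Hyperreal) * D.T := by
  induction he using AddSubmonoid.closure_induction with
  | mem x hx => obtain ⟨i, rfl⟩ := hx; exact D.kk_up i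
  | zero => exact ⟨0, by simp⟩
  | add x y _ _ hx hy =>
    obtain ⟨s, hs⟩ := hx
    obtain ⟨s', hs'⟩ := hy
    refine ⟨s + s', ?_⟩
    rw [Hyperreal.coe_add, add_mul]
    exact add_le_add hs hs'

lemma SS_rep {e : Hyperreal} (he : e ∈ D.SS) :
    ∃ f : ℕ →₀ ℕ, e = f.sum (fun i n => (n : Hyperreal) * D.kk i) := by
  classical
  induction he using AddSubmonoid.closure_induction with
  | mem x hx =>
    obtain ⟨i, rfl⟩ := hx
    exact ⟨Finsupp.single i 1, by simp⟩
  | zero => exact ⟨0, by simp⟩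
  | add x y _ _ hx hy =>
    obtain ⟨f, rfl⟩ := hx
    obtain ⟨f', rfl⟩ := hy
    refine ⟨f + f', ?_⟩
    rw [Finsupp.sum_add_index']
    · simp
    · intro i m n; push_cast; ring

noncomputable def M (ρ : ℕ) : Submodule ℚ Hyperreal :=
  Submodule.span ℚ (D.E '' {e | e ∈ D.SS ∧ e ≤ (ρ : Hyperreal) * D.T})

noncomputable def Minf : Submodule ℚ Hyperreal := Submodule.span ℚ (D.E '' {e | e ∈ D.SS})

lemma M_le_Minf (ρ : ℕ) : D.M ρ ≤ D.Minf :=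
  Submodule.span_mono (Set.image_mono fun _ h => h.1)

lemma M_mono {ρ ρ' : ℕ} (h : ρ ≤ ρ') : D.M ρ ≤ D.M ρ' := by
  apply Submodule.span_mono
  apply Set.image_mono
  rintro e ⟨h1, h2⟩
  refine ⟨h1, h2.trans ?_⟩
  have : (ρ : Hyperreal) ≤ ρ' := by exact_mod_cast h
  exact mul_le_mul_of_nonneg_right this D.T_pos.le

lemma Minf_O : D.Minf ≤ D.O 0 := by
  apply Submodule.span_le.2
  rintro _ ⟨e, he, rfl⟩
  exact D.O_anti (D.SS_nonneg he) (D.E_mem_O e)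

lemma M_gen {ρ m : ℕ} (hm : 4 * ρ < (m + 1) ^ 2) :
    D.E '' {e | e ∈ D.SS ∧ e ≤ (ρ : Hyperreal) * D.T} ⊆
      Set.range (fun f : Fin m → Fin (ρ + 1) => D.E (∑ i, ((f i : ℕ) : Hyperreal) * D.kk i)) := by
  rintro _ ⟨e, ⟨he, hle⟩, rfl⟩
  obtain ⟨f, rfl⟩ := D.SS_rep he
  have hpos : ∀ i, 0 < D.kk i := fun i => D.T_pos.trans_le (D.kk_T i)
  have h1 : ∀ i, (f i : Hyperreal) * D.kk i ≤ (ρ : Hyperreal) * D.T := by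
    intro i
    refine le_trans ?_ hle
    by_cases hi : i ∈ f.support
    · exact Finset.single_le_sum (f := fun i => (f i : Hyperreal) * D.kk i)
        (fun j _ => mul_nonneg (Nat.cast_nonneg _) (hpos j).le) hi
    · rw [Finsupp.notMem_support_iff.1 hi]
      simp only [Nat.cast_zero, zero_mul]
      exact Finset.sum_nonneg (fun j _ => mul_nonneg (Nat.cast_nonneg _) (hpos j).le)
  have h2 : ∀ i, f i < ρ + 1 := by
    intro i
    have h3 : (f i : Hyperreal) * D.T ≤ (ρ : Hyperreal) * D.T :=
      (mul_le_mul_of_nonneg_left (D.kk_T i) (Nat.cast_nonneg _)).trans (h1 i)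
    have h4 := le_of_mul_le_mul_right h3 D.T_pos
    have : f i ≤ ρ := by exact_mod_cast h4
    omega
  have h3 : ∀ i, m ≤ i → f i = 0 := by
    intro i hi
    by_contra h
    have h4 : (1 : Hyperreal) ≤ f i := by exact_mod_cast Nat.one_le_iff_ne_zero.2 h
    have h5 : D.kk i ≤ (ρ : Hyperreal) * D.T := by
      refine le_trans ?_ (h1 i)
      exact le_mul_of_one_le_left (hpos i).le h4
    have h6 := (D.kk_low i).trans h5
    have h7 := le_of_mul_le_mul_right h6 D.T_pos
    have e : (ρ : Hyperreal) = ((ρ : ℝ) : Hyperreal) := rfl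
    rw [e] at h7
    have h8 := coe_le_coe.1 h7
    have h9 : (4 * (ρ : ℝ)) < ((m : ℝ) + 1) ^ 2 := by exact_mod_cast hm
    have h10 : (m : ℝ) ≤ i := by exact_mod_cast hi
    nlinarith
  refine ⟨fun i => ⟨f i, h2 i⟩, ?_⟩
  simp only
  congr 1
  rw [Finset.sum_range (n := m) (fun i => (f i : Hyperreal) * D.kk i) |>.symm]
  rw [Finsupp.sum]
  symm
  apply Finset.sum_subset
  · intro i hi
    rw [Finset.mem_range]
    by_contra h
    exact (Finsupp.mem_support_iff.1 hi) (h3 i (not_lt.1 h))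
  · intro i _ hi
    rw [Finsupp.notMem_support_iff.1 hi]; simp

lemma M_fin (ρ : ℕ) : Module.Finite ℚ (D.M ρ) := by
  apply Module.Finite.span_of_finite
  apply (Set.finite_range _).subset (D.M_gen (m := 4 * ρ) (by nlinarith))

lemma M_rank {ρ m : ℕ} (hm : 4 * ρ < (m + 1) ^ 2) :
    Module.finrank ℚ (D.M ρ) ≤ (ρ + 1) ^ m := by
  classical
  set s : Finset Hyperreal := Finset.univ.image
    (fun f : Fin m → Fin (ρ + 1) => D.E (∑ i, ((f i : ℕ) : Hyperreal) * D.kk i)) with hs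
  have h1 : D.M ρ ≤ Submodule.span ℚ (s : Set Hyperreal) := by
    apply Submodule.span_mono
    rw [hs, Finset.coe_image, Finset.coe_univ, Set.image_univ]
    exact D.M_gen hm
  have : Module.Finite ℚ (Submodule.span ℚ (s : Set Hyperreal)) :=
    Module.Finite.span_of_finite ℚ s.finite_toSet
  calc Module.finrank ℚ (D.M ρ) ≤ Module.finrank ℚ (Submodule.span ℚ (s : Set Hyperreal)) :=
        Submodule.finrank_mono h1
    _ ≤ s.card := finrank_span_finset_le_card s
    _ ≤ _ := Finset.card_image_le
    _ = _ := by simp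

lemma one_mem_M (ρ : ℕ) : (1 : Hyperreal) ∈ D.M ρ := by
  apply Submodule.subset_span
  refine ⟨0, ⟨D.SS.zero_mem, ?_⟩, D.E_zero⟩
  exact mul_nonneg (Nat.cast_nonneg _) D.T_pos.le

lemma exists_pow_lt (c : ℕ) : ∃ y : ℕ, 1 ≤ y ∧ (c * y ^ 2 + 1) ^ 2 < 2 ^ y := by
  have h := tendsto_pow_const_div_const_pow_of_one_lt 4 (r := (2 : ℝ)) (by norm_num)
  have h2 := (h.eventually_lt_const (u := 1 / ((c : ℝ) + 1) ^ 2) (by positivity)).and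
    (eventually_ge_atTop 1)
  obtain ⟨y, hy, hy1⟩ := h2.exists
  refine ⟨y, hy1, ?_⟩
  rw [div_lt_div_iff₀ (by positivity) (by positivity), one_mul] at hy
  have h3 : ((c : ℝ) * y ^ 2 + 1) ^ 2 < 2 ^ y := by
    refine lt_of_le_of_lt ?_ hy
    have : (y : ℝ) ^ 4 * (c + 1) ^ 2 = ((c + 1) * y ^ 2) ^ 2 := by ring
    rw [this]
    have h4 : (1 : ℝ) ≤ y := by exact_mod_cast hy1
    apply pow_le_pow_left₀ (by positivity)
    nlinarith
  exact_mod_cast h3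

lemma slow (q : ℕ) (hq : 1 ≤ q) : ∃ s : ℕ,
    Module.finrank ℚ (D.M ((s + 1) * q)) ≤ 2 * Module.finrank ℚ (D.M (s * q)) := by
  by_contra hcon
  push Not at hcon
  have h1 : ∀ s, 2 ^ s ≤ Module.finrank ℚ (D.M (s * q)) := by
    intro s
    induction s with
    | zero =>
      have := D.M_fin (0 * q)
      have hn : Nontrivial (D.M (0 * q)) :=
        ⟨⟨⟨1, D.one_mem_M _⟩, 0, fun h => one_ne_zero (congrArg Subtype.val h)⟩⟩
      simpa using Nat.succ_le_of_lt (Module.finrank_pos (R := ℚ) (M := D.M (0 * q)))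
    | succ s ih => rw [pow_succ]; have := hcon s; omega
  obtain ⟨y, hy1, hy⟩ := exists_pow_lt (q ^ 2)
  have h2 := h1 (q * y ^ 2)
  have h3 := D.M_rank (ρ := q * y ^ 2 * q) (m := 2 * (q * y)) (by nlinarith)
  have h4 := h2.trans h3
  have e1 : 2 ^ (q * y ^ 2) = (2 ^ y) ^ (q * y) := by rw [← pow_mul]; congr 1; ring
  have e2 : (q * y ^ 2 * q + 1) ^ (2 * (q * y)) = ((q ^ 2 * y ^ 2 + 1) ^ 2) ^ (q * y) := by
    rw [pow_mul]; congr 2; ring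
  rw [e1, e2] at h4
  have hne : q * y ≠ 0 := by positivity
  have := (pow_lt_pow_left₀ hy (Nat.zero_le _) hne)
  omega

end Dat
end HyperPart


section HyperPart
open Polynomial Hyperreal

namespace Dat
variable (D : Dat)

lemma one_le_beta : 1 ≤ ‖D.β‖ := by
  by_contra h
  push Not at h
  have h1 := D.hβ
  have h2 := D.hα0
  have h3 := D.hα1
  have h4 := norm_nonneg D.β
  have : ‖D.β‖ ^ 2 ≤ 1 := pow_le_one₀ h4 h.le
  nlinarith

def NN (w : ℕ) : Submodule ℚ Hyperreal where
  carrier := {x | ∃ (N : ℕ) (p : ℕ → ℤ[X]) (C : ℝ), N ≠ 0 ∧ 0 ≤ C ∧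
    (N : Hyperreal) * x = ofSeq (fun t => aeval D.α (p t)) ∧
    ∀ᶠ t in hyperfilter ℕ, ‖aeval D.β (p t)‖ ≤ C * ‖D.β‖ ^ (w * D.HN (D.nt t))}
  zero_mem' := ⟨1, fun _ => 0, 0, one_ne_zero, le_rfl, by simp; rfl, by simp⟩
  add_mem' := by
    rintro x y ⟨N, p, C, hN, hC, h1, h2⟩ ⟨N', p', C', hN', hC', h1', h2'⟩
    refine ⟨N * N', fun t => (N' : ℤ[X]) * p t + N * p' t, N' * C + N * C', mul_ne_zero hN hN', by positivity, ?_, ?_⟩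
    · have e : ofSeq (fun t => aeval D.α ((N' : ℤ[X]) * p t + (N : ℤ[X]) * p' t)) =
        (N' : Hyperreal) * ofSeq (fun t => aeval D.α (p t)) + (N : Hyperreal) * ofSeq (fun t => aeval D.α (p' t)) := by
        simp only [map_add, map_mul, map_natCast]
        rfl
      rw [e, ← h1, ← h1']; push_cast; ring
    · filter_upwards [h2, h2'] with t ht ht'
      simp only [map_add, map_mul, map_natCast]
      refine (norm_add_le _ _).trans ?_
      rw [norm_mul, norm_mul, Complex.norm_natCast, Complex.norm_natCast, add_mul, mul_assoc, mul_assoc]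
      gcongr
  smul_mem' := by
    rintro q x ⟨N, p, C, hN, hC, h1, h2⟩
    refine ⟨q.den * N, fun t => (q.num : ℤ[X]) * p t, |(q.num : ℝ)| * C, mul_ne_zero q.den_ne_zero hN, by positivity, ?_, ?_⟩
    · have e : ofSeq (fun t => aeval D.α ((q.num : ℤ[X]) * p t)) =
        (q.num : Hyperreal) * ofSeq (fun t => aeval D.α (p t)) := by
        simp only [map_mul, map_intCast]
        rfl
      rw [e, ← h1, Rat.smul_def]
      have : (q.den : Hyperreal) * (q : Hyperreal) = q.num := by
        have := Rat.den_mul_eq_num q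
        exact_mod_cast congrArg (fun z : ℚ => (z : Hyperreal)) this
      push_cast
      rw [← this]; ring
    · filter_upwards [h2] with t ht
      simp only [map_mul, map_intCast]
      rw [norm_mul, Complex.norm_intCast, mul_assoc]
      gcongr

lemma NN_mono {w w' : ℕ} (h : w ≤ w') : D.NN w ≤ D.NN w' := by
  rintro x ⟨N, p, C, hN, hC, h1, h2⟩
  refine ⟨N, p, C, hN, hC, h1, ?_⟩
  filter_upwards [h2] with t ht
  refine ht.trans ?_
  have := D.one_le_beta
  gcongr

lemma NN_mul {w w' : ℕ} {x y : Hyperreal} (hx : x ∈ D.NN w) (hy : y ∈ D.NN w') :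
    x * y ∈ D.NN (w + w') := by
  obtain ⟨N, p, C, hN, hC, h1, h2⟩ := hx
  obtain ⟨N', p', C', hN', hC', h1', h2'⟩ := hy
  refine ⟨N * N', fun t => p t * p' t, C * C', mul_ne_zero hN hN', by positivity, ?_, ?_⟩
  · have e : ofSeq (fun t => aeval D.α (p t * p' t)) =
        ofSeq (fun t => aeval D.α (p t)) * ofSeq (fun t => aeval D.α (p' t)) := by
        simp only [map_mul]
        rfl
    rw [e, ← h1, ← h1']; push_cast; ring
  · filter_upwards [h2, h2'] with t ht ht'
    simp only [map_mul]
    rw [norm_mul, add_mul, pow_add]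
    calc _ ≤ (C * ‖D.β‖ ^ (w * D.HN (D.nt t))) * (C' * ‖D.β‖ ^ (w' * D.HN (D.nt t))) := by gcongr
      _ = _ := by ring

lemma NN_one : (1 : Hyperreal) ∈ D.NN 0 :=
  ⟨1, fun _ => 1, 1, one_ne_zero, zero_le_one, by simp; rfl, by simp⟩

lemma NN_xi : D.ξ ∈ D.NN 1 := by
  refine ⟨1, fun t => ∏ i ∈ Finset.range (D.nt t), (1 + X ^ (D.k i)), |D.C1|, one_ne_zero, abs_nonneg _, ?_, ?_⟩
  · simp only [map_prod, map_add, map_one, map_pow, aeval_X, Nat.cast_one, one_mul]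
    rfl
  · refine Eventually.of_forall fun t => ?_
    simp only [map_prod, map_add, map_one, map_pow, aeval_X, one_mul]
    refine (D.hPβ (D.nt t)).trans ?_
    have h := le_abs_self D.C1
    have : ‖D.β‖ ^ (∑ i ∈ Finset.range (D.nt t), D.k i) = ‖D.β‖ ^ (D.HN (D.nt t)) := rfl
    rw [this]
    gcongr

lemma NN_xi_pow (k : ℕ) : D.ξ ^ k ∈ D.NN k := by
  induction k with
  | zero => simpa using D.NN_one
  | succ k ih => rw [pow_succ]; exact D.NN_mul ih D.NN_xi

lemma M_le_NN (ρ : ℕ) : D.M ρ ≤ D.NN ρ := by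
  apply Submodule.span_le.2
  rintro _ ⟨e, ⟨he, hle⟩, rfl⟩
  obtain ⟨s, rfl⟩ := D.SS_nat he
  refine ⟨1, fun t => X ^ (s t), 1, one_ne_zero, zero_le_one, ?_, ?_⟩
  · rw [E_ofSeq]
    simp
  · have e : (ρ : Hyperreal) * D.T = ofSeq (fun t => (ρ : ℝ) * (D.HN (D.nt t) : ℝ)) := rfl
    rw [e] at hle
    filter_upwards [ofSeq_le_ofSeq.1 hle] with t ht
    have h1 : s t ≤ ρ * D.HN (D.nt t) := by exact_mod_cast ht
    simp only [map_pow, aeval_X, norm_pow, one_mul]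
    exact pow_le_pow_right₀ D.one_le_beta h1

lemma NN_zero {w : ℕ} {x : Hyperreal} (hx : x ∈ D.NN w) (hO : x ∈ D.O (((w + 1 : ℕ) : Hyperreal) * D.T)) :
    x = 0 := by
  obtain ⟨N, p, C, hN, hC, h1, h2⟩ := hx
  obtain ⟨C', hC'⟩ := hO
  by_contra hne
  have hN' : (0 : Hyperreal) < N := by exact_mod_cast Nat.pos_of_ne_zero hN
  have h3 : ∀ᶠ t in hyperfilter ℕ, aeval D.α (p t) ≠ 0 := by
    rw [Ultrafilter.eventually_not]
    intro h
    have : ofSeq (fun t => aeval D.α (p t)) = ofSeq (fun _ => 0) := hyp_eq.2 h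
    rw [this] at h1
    exact (mul_ne_zero hN'.ne' hne) h1
  have h4 : |ofSeq (fun t => aeval D.α (p t))| ≤ (N : Hyperreal) * ((C' : Hyperreal) * D.E (((w + 1 : ℕ) : Hyperreal) * D.T)) := by
    rw [← h1, abs_mul, abs_of_pos hN']
    gcongr
  have e1 : (N : Hyperreal) * ((C' : Hyperreal) * D.E (((w + 1 : ℕ) : Hyperreal) * D.T)) =
    ofSeq (fun t => (N : ℝ) * (C' * D.α ^ (((w + 1 : ℕ) : ℝ) * (D.HN (D.nt t) : ℝ)))) := rfl
  rw [e1, hyp_abs] at h4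
  have h5 : (1 : Hyperreal) ≤ ((N * C' * C ^ 2 : ℝ) : Hyperreal) * D.E D.T := by
    have e2 : ((N * C' * C ^ 2 : ℝ) : Hyperreal) * D.E D.T =
      ofSeq (fun t => (N * C' * C ^ 2 : ℝ) * D.α ^ ((D.HN (D.nt t) : ℝ))) := rfl
    have e3 : (1 : Hyperreal) = ofSeq (fun _ => 1) := rfl
    rw [e2, e3, ofSeq_le_ofSeq]
    filter_upwards [h2, h3, ofSeq_le_ofSeq.1 h4] with t ht2 ht3 ht4
    have h6 := D.hnorm _ ht3
    rw [← Nat.cast_mul, Real.rpow_natCast] at ht4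
    rw [Real.rpow_natCast]
    set m := D.HN (D.nt t) with hm
    have h7 : ‖aeval D.β (p t)‖ ^ 2 ≤ (C * ‖D.β‖ ^ (w * m)) ^ 2 := by gcongr
    have h8 : |aeval D.α (p t)| * ‖aeval D.β (p t)‖ ^ 2 ≤
       (N * (C' * D.α ^ ((w + 1) * m))) * (C * ‖D.β‖ ^ (w * m)) ^ 2 :=
      mul_le_mul ht4 h7 (by positivity) ((abs_nonneg _).trans ht4)
    refine (h6.trans h8).trans (le_of_eq ?_)
    have h9 : D.α ^ (w * m) * (‖D.β‖ ^ (w * m)) ^ 2 = 1 := by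
      rw [pow_right_comm, ← mul_pow, mul_comm, D.hβ, one_pow]
    have h10 : D.α ^ ((w + 1) * m) = D.α ^ (w * m) * D.α ^ m := by rw [← pow_add]; congr 1; ring
    rw [h10, mul_pow]
    linear_combination (N * C' * C ^ 2 * D.α ^ m) * h9
  have h6 := D.E_small D.T_inf (e := 1 / (|N * C' * C ^ 2| + 1)) (by positivity)
  have h7 : ((N * C' * C ^ 2 : ℝ) : Hyperreal) * D.E D.T ≤ ((|N * C' * C ^ 2| + 1 : ℝ) : Hyperreal) * D.E D.T := by
    apply mul_le_mul_of_nonneg_right _ (D.E_pos _).le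
    rw [coe_le_coe]
    linarith [le_abs_self (N * C' * C ^ 2)]
  have h8 : ((|N * C' * C ^ 2| + 1 : ℝ) : Hyperreal) * D.E D.T < ((|N * C' * C ^ 2| + 1 : ℝ) : Hyperreal) * ((1 / (|N * C' * C ^ 2| + 1) : ℝ) : Hyperreal) := by
    apply mul_lt_mul_of_pos_left h6
    rw [coe_pos]
    positivity
  rw [← Hyperreal.coe_mul, mul_one_div_cancel (by positivity)] at h8
  have := h5.trans_lt (h7.trans_lt h8)
  simp at this

end Dat
end HyperPart


section HyperPart
open Polynomial Hyperreal

namespace Dat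
variable (D : Dat)

noncomputable def BB (V : ℕ) : Submodule ℚ Hyperreal := D.M V ⊔ D.O ((V : Hyperreal) * D.T)

lemma M_le_BB (V : ℕ) : D.M V ≤ D.BB V := le_sup_left
lemma O_le_BB (V : ℕ) : D.O ((V : Hyperreal) * D.T) ≤ D.BB V := le_sup_right

lemma VT_nonneg (V : ℕ) : 0 ≤ (V : Hyperreal) * D.T := mul_nonneg (Nat.cast_nonneg _) D.T_pos.le

lemma BB_E {V : ℕ} {e : Hyperreal} (he : e ∈ D.SS) : D.E e ∈ D.BB V := by
  rcases le_total e ((V : Hyperreal) * D.T) with h | h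
  · exact D.M_le_BB V (Submodule.subset_span ⟨e, ⟨he, h⟩, rfl⟩)
  · exact D.O_le_BB V (D.O_anti h (D.E_mem_O e))

lemma BB_one (V : ℕ) : (1 : Hyperreal) ∈ D.BB V := D.M_le_BB V (D.one_mem_M V)

lemma BB_mul {V : ℕ} {x y : Hyperreal} (hx : x ∈ D.BB V) (hy : y ∈ D.BB V) : x * y ∈ D.BB V := by
  have hMM : D.M V * D.M V ≤ D.BB V := by
    unfold M
    rw [Submodule.span_mul_span]
    apply Submodule.span_le.2
    rintro _ ⟨_, ⟨e, ⟨he, -⟩, rfl⟩, _, ⟨e', ⟨he', -⟩, rfl⟩, rfl⟩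
    simp only
    rw [← E_add]
    exact D.BB_E (D.SS.add_mem he he')
  have hMO : D.M V ≤ D.O 0 := (D.M_le_Minf V).trans D.Minf_O
  have hOO := D.O_anti (D.VT_nonneg V)
  obtain ⟨m, hm, o, ho, rfl⟩ := Submodule.mem_sup.1 hx
  obtain ⟨m', hm', o', ho', rfl⟩ := Submodule.mem_sup.1 hy
  have e : (m + o) * (m' + o') = m * m' + (m * o' + (m' + o') * o) := by ring
  rw [e]
  refine Submodule.add_mem _ (hMM (Submodule.mul_mem_mul hm hm')) (D.O_le_BB V ?_)
  refine Submodule.add_mem _ (D.O_mul_zero (hMO hm) ho') (D.O_mul_zero ?_ ho)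
  exact Submodule.add_mem _ (hMO hm') (hOO ho')

lemma BB_pow {V : ℕ} {x : Hyperreal} (hx : x ∈ D.BB V) (n : ℕ) : x ^ n ∈ D.BB V := by
  induction n with
  | zero => simpa using D.BB_one V
  | succ n ih => rw [pow_succ]; exact D.BB_mul ih hx

lemma inv_O {x : Hyperreal} (hx : 1 ≤ x) : x⁻¹ ∈ D.O 0 := by
  apply D.O_zero_of_le (C := 1)
  have : 0 < x := zero_lt_one.trans_le hx
  rw [abs_of_pos (by positivity)]
  simpa using inv_le_one_of_one_le₀ hx

lemma BB_inv_one (V i : ℕ) : (1 + D.E (D.kk i))⁻¹ ∈ D.BB V := by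
  set u := D.E (D.kk i) with hu
  have hu0 : 0 < u := D.E_pos _
  have h1 : (1 + u)⁻¹ = ∑ m ∈ Finset.range V, (-u) ^ m + (1 + u)⁻¹ * (-u) ^ V := by
    have := geom_sum_mul (-u) V
    have h2 : (1 + u) ≠ 0 := by positivity
    field_simp
    linear_combination this
  have huB : -u ∈ D.BB V := Submodule.neg_mem _ (D.BB_E (D.kk_SS i))
  rw [h1]
  refine Submodule.add_mem _ (Submodule.sum_mem _ fun m _ => D.BB_pow huB m) (D.O_le_BB V ?_)
  refine D.O_mul_zero (D.inv_O (by linarith)) ?_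
  have h3 : D.E ((V : Hyperreal) * D.kk i) ∈ D.O ((V : Hyperreal) * D.T) := by
    apply D.O_anti _ (D.E_mem_O _)
    exact mul_le_mul_of_nonneg_left (D.kk_T i) (Nat.cast_nonneg _)
  rw [E_nsmul] at h3
  rw [neg_pow]
  refine D.O_mul_zero (D.pow_O_zero ?_ V) h3
  simpa using D.coe_O_zero (-1)

lemma BB_PJ_inv (V j : ℕ) : (D.PJ j)⁻¹ ∈ D.BB V := by
  induction j with
  | zero => simpa [PJ] using D.BB_one V
  | succ j ih =>
    have : D.PJ (j + 1) = D.PJ j * (1 + D.E (D.kk j)) := by simp [PJ, Finset.prod_range_succ]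
    rw [this, mul_inv]
    exact D.BB_mul ih (D.BB_inv_one V j)

lemma kk_cof (V : ℕ) : ∃ j, (V : Hyperreal) * D.T ≤ D.kk j := by
  refine ⟨2 * V, le_trans ?_ (D.kk_low _)⟩
  apply mul_le_mul_of_nonneg_right _ D.T_pos.le
  have e : (V : Hyperreal) = ((V : ℝ) : Hyperreal) := rfl
  rw [e, coe_le_coe]
  push_cast
  nlinarith [sq_nonneg ((V : ℝ))]

lemma BB_g_inv (V : ℕ) : (D.g)⁻¹ ∈ D.BB V := by
  obtain ⟨j, hj⟩ := D.kk_cof V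
  have h1 := D.one_le_g
  have h2 := D.one_le_PJ j
  have e : (D.g)⁻¹ = (D.PJ j)⁻¹ - ((D.g)⁻¹ * (D.PJ j)⁻¹) * (D.g - D.PJ j) := by
    have h3 : D.g ≠ 0 := by positivity
    have h4 : D.PJ j ≠ 0 := by positivity
    field_simp
    ring
  rw [e]
  refine Submodule.sub_mem _ (D.BB_PJ_inv V j) (D.O_le_BB V (D.O_mul_zero ?_ (D.O_anti hj ⟨_, D.g_sub j⟩)))
  exact D.O_mul_zero (D.inv_O h1) (D.inv_O h2)

lemma stage_one (halg : IsAlgebraic ℚ D.L) : ∃ (n : ℕ) (A : Fin (n + 1) → Hyperreal),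
    (∃ i, A i ≠ 0) ∧ (∀ i, A i ∈ D.Minf) ∧ ∑ i : Fin (n + 1), D.ξ ^ (i : ℕ) * A i = 0 := by
  set x : Hyperreal := (D.L : Hyperreal) with hx
  have hint : IsIntegral ℚ x := by
    have h1 : IsIntegral ℚ D.L := halg.isIntegral
    exact h1.map (coeRingHom : ℝ →+* Hyperreal).toRatAlgHom
  set W : Submodule ℚ Hyperreal := Subalgebra.toSubmodule (Algebra.adjoin ℚ {x}) with hW
  have hWfin : Module.Finite ℚ W := Module.Finite.iff_fg.2 hint.fg_adjoin_singleton
  have hWp : ∀ k, x ^ k ∈ W := fun k => by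
    rw [hW, Subalgebra.mem_toSubmodule]
    exact pow_mem (Algebra.subset_adjoin (Set.mem_singleton x)) k
  have hWO : W ≤ D.O 0 := by
    intro y hy
    rw [hW, Subalgebra.mem_toSubmodule] at hy
    induction hy using Algebra.adjoin_induction with
    | mem z hz => rw [Set.mem_singleton_iff.1 hz]; exact D.coe_O_zero _
    | algebraMap r =>
      have : (algebraMap ℚ Hyperreal r) = r • (1 : Hyperreal) := by rw [Algebra.smul_def, mul_one]
      rw [this]
      exact Submodule.smul_mem _ _ (by simpa using D.coe_O_zero 1)
    | add a b _ _ ha hb => exact Submodule.add_mem _ ha hb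
    | mul a b _ _ ha hb => exact D.O_mul_zero ha hb
  set d := Module.finrank ℚ W with hd
  obtain ⟨s, hs⟩ := D.slow (2 * d + 1) (by omega)
  set R := s * (2 * d + 1) with hR
  set V := (s + 1) * (2 * d + 1) with hV
  have hMVfin := D.M_fin V
  have hMRfin := D.M_fin R
  have hprod : Module.finrank ℚ ↥(W * D.M V) ≤ d * Module.finrank ℚ (D.M V) := by
    rw [← Submodule.mulMap_range]
    refine (LinearMap.finrank_range_le _).trans ?_
    rw [Module.finrank_tensorProduct]
  have hprodfin : Module.Finite ℚ ↥(W * D.M V) := by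
    rw [← Submodule.mulMap_range]
    infer_instance
  have hmem : ∀ (k : ℕ) (a : Hyperreal), a ∈ D.M R → D.ξ ^ k * a ∈ W * D.M V ⊔ D.O ((V : Hyperreal) * D.T) := by
    intro k a ha
    have hξ : D.ξ = x * (D.g)⁻¹ := by
      have h1 : D.ξ ≠ 0 := D.ξ_pos.ne'
      have h2 : x ≠ 0 := (coe_pos.2 (by linarith [D.one_le_L])).ne'
      rw [Dat.g, ← hx]; field_simp
    have h3 : (D.g)⁻¹ ^ k * a ∈ D.BB V :=
      D.BB_mul (D.BB_pow (D.BB_g_inv V) k) (D.M_le_BB V (D.M_mono (by rw [hR, hV]; gcongr; omega) ha))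
    obtain ⟨m, hm, o, ho, hmo⟩ := Submodule.mem_sup.1 h3
    rw [hξ, mul_pow, mul_assoc, ← hmo, mul_add]
    exact Submodule.add_mem_sup (Submodule.mul_mem_mul (hWp k) hm) (D.O_mul_zero (hWO (hWp k)) ho)
  let Φ : (Fin (2 * d + 1) → D.M R) →ₗ[ℚ] Hyperreal :=
    ∑ k : Fin (2 * d + 1), (LinearMap.mulLeft ℚ (D.ξ ^ (k : ℕ))) ∘ₗ (D.M R).subtype ∘ₗ LinearMap.proj k
  have hΦ : ∀ A, Φ A = ∑ k : Fin (2 * d + 1), D.ξ ^ (k : ℕ) * (A k : Hyperreal) := by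
    intro A; simp [Φ]
  let Ψ := (D.O ((V : Hyperreal) * D.T)).mkQ ∘ₗ Φ
  have hrange : LinearMap.range Ψ ≤ (W * D.M V).map (D.O ((V : Hyperreal) * D.T)).mkQ := by
    rintro _ ⟨A, rfl⟩
    have h1 : Φ A ∈ W * D.M V ⊔ D.O ((V : Hyperreal) * D.T) := by
      rw [hΦ]
      exact Submodule.sum_mem _ fun k _ => hmem k _ (A k).2
    obtain ⟨m, hm, o, ho, hmo⟩ := Submodule.mem_sup.1 h1
    refine ⟨m, hm, ?_⟩
    simp only [Ψ, LinearMap.comp_apply]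
    rw [← hmo, map_add]
    have : (D.O ((V : Hyperreal) * D.T)).mkQ o = 0 := by
      simpa using ho
    rw [this, add_zero]
  have hr1 : Module.finrank ℚ (LinearMap.range Ψ) ≤ d * Module.finrank ℚ (D.M V) :=
    (Submodule.finrank_mono hrange).trans ((Submodule.finrank_map_le _ _).trans hprod)
  have hpos : 0 < Module.finrank ℚ (D.M R) := by
    have hn : Nontrivial (D.M R) :=
        ⟨⟨⟨1, D.one_mem_M _⟩, 0, fun h => one_ne_zero (congrArg Subtype.val h)⟩⟩
    exact Module.finrank_pos
  have hdim : Module.finrank ℚ (Fin (2 * d + 1) → D.M R) = (2 * d + 1) * Module.finrank ℚ (D.M R) := by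
    rw [Module.finrank_pi_fintype]; simp
  have hrk := LinearMap.finrank_range_add_finrank_ker Ψ
  have hker : 0 < Module.finrank ℚ (LinearMap.ker Ψ) := by
    rw [hdim] at hrk
    nlinarith
  obtain ⟨⟨A, hA⟩, hA0⟩ := (Module.finrank_pos_iff_exists_ne_zero (R := ℚ) (M := LinearMap.ker Ψ)).1 hker
  have hA1 : Φ A ∈ D.O ((V : Hyperreal) * D.T) := by
    have := LinearMap.mem_ker.1 hA
    simpa [Ψ] using this
  have hA2 : A ≠ 0 := fun h => hA0 (Subtype.ext h)
  refine ⟨2 * d, fun i => (A i : Hyperreal), ?_, fun i => D.M_le_Minf R (A i).2, ?_⟩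
  · by_contra hcon
    push Not at hcon
    exact hA2 (funext fun i => Subtype.ext (hcon i))
  · rw [← hΦ]
    apply D.NN_zero (w := R + 2 * d)
    · rw [hΦ]
      refine Submodule.sum_mem _ fun k _ => ?_
      have := D.NN_mul (D.NN_xi_pow k) (D.M_le_NN R (A k).2)
      exact D.NN_mono (by have := k.2; omega) this
    · have : R + 2 * d + 1 = V := by rw [hR, hV]; ring
      rw [this]; exact hA1

end Dat
end HyperPart

set_option linter.unusedSectionVars false

section HahnPart
variable {Γ : Type*} [AddCommGroup Γ] [LinearOrder Γ] [IsOrderedAddMonoid Γ]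

/-- coefficientwise derivation attached to an additive weight -/
noncomputable def hderFun (φ : Γ →+ ℝ) (x : HahnSeries Γ ℝ) : HahnSeries Γ ℝ where
  coeff a := φ a * x.coeff a
  isPWO_support' := x.isPWO_support.mono (by
    intro a ha h0
    apply ha
    simp [h0])

noncomputable def hder (φ : Γ →+ ℝ) :
    Derivation ℝ (HahnSeries Γ ℝ) (HahnSeries Γ ℝ) :=
  Derivation.mk'
    { toFun := hderFun φ
      map_add' := by
        intro x y; ext a; simp [hderFun, mul_add]
      map_smul' := by
        intro r x; ext a; simp [hderFun]; ring }
    (by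
      intro x y
      ext a
      have hx : (hderFun φ x).support ⊆ x.support := by
        intro b hb h0; apply hb; simp [hderFun, h0]
      have hy : (hderFun φ y).support ⊆ y.support := by
        intro b hb h0; apply hb; simp [hderFun, h0]
      simp only [LinearMap.coe_mk, AddHom.coe_mk, smul_eq_mul, HahnSeries.coeff_add]
      rw [mul_comm y, HahnSeries.coeff_mul_left' x.isPWO_support hx,
        HahnSeries.coeff_mul_right' y.isPWO_support hy]
      simp only [hderFun, HahnSeries.coeff_mul]
      rw [Finset.mul_sum, ← Finset.sum_add_distrib]
      apply Finset.sum_congr rfl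
      intro p hp
      have := (Finset.mem_antidiagonal.1 hp).2.2
      rw [← this, map_add]
      ring)

@[simp] lemma hder_coeff (φ : Γ →+ ℝ) (x : HahnSeries Γ ℝ) (a : Γ) :
    (hder φ x).coeff a = φ a * x.coeff a := rfl

lemma hder_iter_coeff (φ : Γ →+ ℝ) (x : HahnSeries Γ ℝ) (n : ℕ) (a : Γ) :
    ((hder φ)^[n] x).coeff a = φ a ^ n * x.coeff a := by
  induction n with
  | zero => simp
  | succ n ih => rw [Function.iterate_succ_apply', hder_coeff, ih]; ring

def Van (γ : Γ) (x : HahnSeries Γ ℝ) : Prop := ∀ a < γ, x.coeff a = 0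

lemma Van.mul {γ γ' : Γ} {x y : HahnSeries Γ ℝ} (hx : Van γ x) (hy : Van γ' y) :
    Van (γ + γ') (x * y) := by
  intro a ha
  rw [HahnSeries.coeff_mul]
  apply Finset.sum_eq_zero
  intro p hp
  have h := (Finset.mem_antidiagonal.1 hp).2.2
  by_cases h1 : p.1 < γ
  · rw [hx _ h1, zero_mul]
  · by_cases h2 : p.2 < γ'
    · rw [hy _ h2, mul_zero]
    · exfalso
      have := add_le_add (not_lt.1 h1) (not_lt.1 h2)
      rw [h] at this
      exact absurd ha (not_lt.2 this)

lemma Van.add {γ : Γ} {x y : HahnSeries Γ ℝ} (hx : Van γ x) (hy : Van γ y) :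
    Van γ (x + y) := by
  intro a ha; simp [hx a ha, hy a ha]

lemma Van.sub {γ : Γ} {x y : HahnSeries Γ ℝ} (hx : Van γ x) (hy : Van γ y) :
    Van γ (x - y) := by
  intro a ha; simp [hx a ha, hy a ha]

lemma Van.sum {ι : Type*} {s : Finset ι} {γ : Γ} {f : ι → HahnSeries Γ ℝ}
    (h : ∀ i ∈ s, Van γ (f i)) : Van γ (∑ i ∈ s, f i) := by
  intro a ha
  rw [HahnSeries.coeff_sum]
  exact Finset.sum_eq_zero fun i hi => h i hi a ha

lemma Van.mono {γ γ' : Γ} {x : HahnSeries Γ ℝ} (h : Van γ x) (hl : γ' ≤ γ) : Van γ' x :=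
  fun a ha => h a (ha.trans_le hl)

/-- finite support subring -/
noncomputable def finSub (Γ : Type*) [AddCommGroup Γ] [LinearOrder Γ] [IsOrderedAddMonoid Γ] :
    Subring (HahnSeries Γ ℝ) where
  carrier := {x | x.support.Finite}
  mul_mem' := by
    intro x y hx hy
    exact (Set.Finite.add hx hy).subset HahnSeries.support_mul_subset
  one_mem' := by
    simp only [Set.mem_ofPred_eq, HahnSeries.support_one]
    exact Set.finite_singleton _
  add_mem' := by
    intro x y hx hy
    exact (hx.union hy).subset (HahnSeries.support_add_subset _ _)
  zero_mem' := by simp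
  neg_mem' := by
    intro x hx
    simpa using hx

lemma hder_finSub (φ : Γ →+ ℝ) {x : HahnSeries Γ ℝ} (hx : x ∈ finSub Γ) :
    hder φ x ∈ finSub Γ := by
  refine Set.Finite.subset hx ?_
  intro a ha h0
  apply ha
  simp [h0]

noncomputable def finFld (Γ : Type*) [AddCommGroup Γ] [LinearOrder Γ] [IsOrderedAddMonoid Γ] :
    Subfield (HahnSeries Γ ℝ) := Subfield.closure (finSub Γ : Set (HahnSeries Γ ℝ))

lemma mem_finFld {x : HahnSeries Γ ℝ} :
    x ∈ finFld Γ ↔ ∃ y ∈ finSub Γ, ∃ z ∈ finSub Γ, y / z = x := by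
  unfold finFld
  rw [Subfield.mem_closure_iff, Subring.closure_eq]

lemma hder_finFld (φ : Γ →+ ℝ) {x : HahnSeries Γ ℝ} (hx : x ∈ finFld Γ) :
    hder φ x ∈ finFld Γ := by
  obtain ⟨y, hy, z, hz, rfl⟩ := mem_finFld.1 hx
  have hsub : ∀ w ∈ finSub Γ, w ∈ finFld Γ := fun w hw => Subfield.subset_closure hw
  by_cases hz0 : z = 0
  · subst hz0; simp
  have hdy := hsub _ (hder_finSub φ hy)
  have hdz := hsub _ (hder_finSub φ hz)
  have e : hder φ (y / z) = (hder φ y - (y / z) * hder φ z) / z := by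
    have h1 : hder φ (y / z * z) = hder φ y := by rw [div_mul_cancel₀ _ hz0]
    rw [Derivation.leibniz, smul_eq_mul, smul_eq_mul] at h1
    rw [eq_div_iff hz0, ← h1]; ring
  rw [e]
  exact div_mem (sub_mem hdy (mul_mem hx hdz)) (hsub _ hz)

/-- An algebraic element generates a stable field; its derivatives are dependent over the
finite support subring. -/
lemma exists_ode (φ : Γ →+ ℝ) (g : HahnSeries Γ ℝ) (hg : IsAlgebraic (finFld Γ) g) :
    ∃ (n : ℕ) (B : Fin n → HahnSeries Γ ℝ), (∀ i, B i ∈ finSub Γ) ∧ (∃ i, B i ≠ 0) ∧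
      ∑ i, B i * (hder φ)^[i] g = 0 := by
  classical
  set K := finFld Γ with hK
  set E := IntermediateField.adjoin K {g} with hE
  have hint : IsIntegral K g := hg.isIntegral
  have hgE : g ∈ E := IntermediateField.mem_adjoin_simple_self K g
  have hKE : ∀ x ∈ K, x ∈ E := fun x hx => E.algebraMap_mem ⟨x, hx⟩
  have hpE : ∀ p : Polynomial K, Polynomial.aeval g p ∈ E := by
    intro p
    have := Polynomial.aeval_mem_adjoin_singleton K g (p := p)
    exact IntermediateField.algebra_adjoin_le_adjoin K _ this
  have key : ∀ p : Polynomial K,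
      hder φ (Polynomial.aeval g p) - Polynomial.aeval g (Polynomial.derivative p) * hder φ g ∈ E := by
    intro p
    induction p using Polynomial.induction_on' with
    | add p q hp hq =>
      have := add_mem hp hq
      simp only [map_add] at this ⊢
      convert this using 1
      ring
    | monomial n a =>
      have h1 : hder φ (Polynomial.aeval g (Polynomial.monomial n a)) -
          Polynomial.aeval g (Polynomial.derivative (Polynomial.monomial n a)) * hder φ g
          = hder φ (a : HahnSeries Γ ℝ) * g ^ n := by
        rw [Polynomial.derivative_monomial, Polynomial.aeval_monomial, Polynomial.aeval_monomial,
          Derivation.leibniz, Derivation.leibniz_pow]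
        simp only [smul_eq_mul, nsmul_eq_mul, map_mul, map_natCast]
        have : (algebraMap K (HahnSeries Γ ℝ)) a = (a : HahnSeries Γ ℝ) := rfl
        rw [this]
        ring
      rw [h1]
      exact mul_mem (hKE _ (hder_finFld φ a.2)) (pow_mem hgE n)
  have hdg : hder φ g ∈ E := by
    have h1 := key (minpoly K g)
    have hc0 : CharZero (HahnSeries Γ ℝ) :=
      charZero_of_injective_algebraMap (R := ℝ) (A := HahnSeries Γ ℝ) (algebraMap ℝ _).injective
    have hc1 : CharZero K :=
      ⟨fun a b hab => hc0.1 (by have := congrArg (fun x : K => (x : HahnSeries Γ ℝ)) hab; simpa using this)⟩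
    have hsep : (minpoly K g).Separable := (minpoly.irreducible hint).separable
    have h2 : Polynomial.aeval g (Polynomial.derivative (minpoly K g)) ≠ 0 :=
      hsep.aeval_derivative_ne_zero (minpoly.aeval K g)
    rw [minpoly.aeval, map_zero, zero_sub] at h1
    have h3 := neg_mem h1
    rw [neg_neg] at h3
    have h4 := E.div_mem h3 (hpE (Polynomial.derivative (minpoly K g)))
    rwa [mul_div_cancel_left₀ _ h2] at h4
  have hdE : ∀ x ∈ E, hder φ x ∈ E := by
    intro x hx
    have hx' : x ∈ Algebra.adjoin K {g} := by
      have := IntermediateField.adjoin_simple_toSubalgebra_of_isAlgebraic hg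
      rw [← this]; exact hx
    rw [Algebra.adjoin_singleton_eq_range_aeval] at hx'
    obtain ⟨p, rfl⟩ := hx'
    have := add_mem (key p) (mul_mem (hpE (Polynomial.derivative p)) hdg)
    simpa using this
  have hit : ∀ n : ℕ, (hder φ)^[n] g ∈ E := by
    intro n
    induction n with
    | zero => simpa using hgE
    | succ n ih => rw [Function.iterate_succ_apply']; exact hdE _ ih
  have : FiniteDimensional K E := IntermediateField.adjoin.finiteDimensional hint
  let v : Fin (Module.finrank K E + 1) → E := fun i => ⟨(hder φ)^[i] g, hit i⟩
  have hv : ¬ LinearIndependent K v := by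
    intro h
    have := h.fintype_card_le_finrank
    simp at this
  rw [Fintype.not_linearIndependent_iff] at hv
  obtain ⟨c, hc, i0, hi0⟩ := hv
  have hc' : ∑ i, (c i : HahnSeries Γ ℝ) * (hder φ)^[i] g = 0 := by
    have := congrArg (fun x : E => (x : HahnSeries Γ ℝ)) hc
    simp [v, Algebra.smul_def] at this
    exact this
  choose y hy z hz hyz using fun i => mem_finFld.1 (c i).2
  have hz0 : ∀ i, (z i ≠ 0 ∨ c i = 0) := by
    intro i
    by_cases h : z i = 0
    · right
      have := hyz i
      rw [h, div_zero] at this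
      exact Subtype.ext this.symm
    · left; exact h
  let w : Fin (Module.finrank K E + 1) → HahnSeries Γ ℝ := fun i => if z i = 0 then 1 else z i
  have hw : ∀ i, w i ∈ finSub Γ := by
    intro i; simp only [w]; split_ifs
    · exact one_mem _
    · exact hz i
  have hw0 : ∀ i, w i ≠ 0 := by
    intro i; simp only [w]; split_ifs with h
    · exact one_ne_zero
    · exact h
  have hcw : ∀ i, (c i : HahnSeries Γ ℝ) * w i ∈ finSub Γ := by
    intro i
    simp only [w]; split_ifs with h
    · rcases hz0 i with h' | h'
      · exact absurd h h'
      · rw [h']; simp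
    · rw [← hyz i, div_mul_cancel₀ _ h]; exact hy i
  refine ⟨Module.finrank K E + 1, fun i => c i * ∏ j, w j, ?_, ⟨i0, ?_⟩, ?_⟩
  · intro i
    change (c i : HahnSeries Γ ℝ) * ∏ j, w j ∈ finSub Γ
    rw [← Finset.mul_prod_erase Finset.univ w (Finset.mem_univ i), ← mul_assoc]
    exact mul_mem (hcw i) (prod_mem fun j _ => hw j)
  · refine mul_ne_zero ?_ (Finset.prod_ne_zero_iff.2 fun j _ => hw0 j)
    intro h
    exact hi0 (Subtype.ext h)
  · have : ∑ i, (c i * ∏ j, w j) * (hder φ)^[i] g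
        = (∏ j, w j) * ∑ i, (c i : HahnSeries Γ ℝ) * (hder φ)^[i] g := by
      rw [Finset.mul_sum]; exact Finset.sum_congr rfl fun i _ => by ring
    rw [this, hc', mul_zero]


def UBd (γ : Γ) (x : HahnSeries Γ ℝ) : Prop := ∀ a, γ < a → x.coeff a = 0

lemma UBd.mul {γ γ' : Γ} {x y : HahnSeries Γ ℝ} (hx : UBd γ x) (hy : UBd γ' y) :
    UBd (γ + γ') (x * y) := by
  intro a ha
  rw [HahnSeries.coeff_mul]
  apply Finset.sum_eq_zero
  intro p hp
  have h := (Finset.mem_antidiagonal.1 hp).2.2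
  by_cases h1 : γ < p.1
  · rw [hx _ h1, zero_mul]
  · by_cases h2 : γ' < p.2
    · rw [hy _ h2, mul_zero]
    · exfalso
      have := add_le_add (not_lt.1 h1) (not_lt.1 h2)
      rw [h] at this
      exact absurd ha (not_lt.2 this)

lemma UBd.coeff_mul {γ γ' : Γ} {x y : HahnSeries Γ ℝ} (hx : UBd γ x) (hy : UBd γ' y) :
    (x * y).coeff (γ + γ') = x.coeff γ * y.coeff γ' := by
  rw [HahnSeries.coeff_mul]
  rw [Finset.sum_eq_single (γ, γ')]
  · intro p hp hne
    have h := (Finset.mem_antidiagonal.1 hp).2.2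
    by_cases h1 : γ < p.1
    · rw [hx _ h1, zero_mul]
    · by_cases h2 : γ' < p.2
      · rw [hy _ h2, mul_zero]
      · exfalso
        have h3 := not_lt.1 h1
        have h4 := not_lt.1 h2
        apply hne
        rcases h3.lt_or_eq with h5 | h5
        · exact absurd h (add_lt_add_of_lt_of_le h5 h4).ne
        · rw [h5] at h
          exact Prod.ext h5 (add_left_cancel h)
  · intro hp
    by_contra hne
    apply hp
    rw [Finset.mem_antidiagonal]
    exact ⟨left_ne_zero_of_mul hne, right_ne_zero_of_mul hne, rfl⟩

lemma UBd_prod (γ : ℕ → Γ) (hγ : ∀ i, 0 < γ i) (c : ℕ → ℝ) (j : ℕ) :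
    UBd (∑ i ∈ Finset.range j, γ i) (∏ i ∈ Finset.range j, (1 + HahnSeries.single (γ i) (c i))) ∧
    (∏ i ∈ Finset.range j, (1 + HahnSeries.single (γ i) (c i))).coeff (∑ i ∈ Finset.range j, γ i)
      = ∏ i ∈ Finset.range j, c i := by
  induction j with
  | zero =>
    constructor
    · intro a ha
      simp only [Finset.range_zero, Finset.sum_empty, Finset.prod_empty] at ha ⊢
      simp [HahnSeries.coeff_one, ha.ne']
    · simp
  | succ j ih =>
    have h1 : UBd (γ j) (1 + HahnSeries.single (γ j) (c j)) := by
      intro a ha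
      simp [HahnSeries.coeff_one, HahnSeries.coeff_single_of_ne ha.ne', ((hγ j).trans ha).ne']
    rw [Finset.sum_range_succ, Finset.prod_range_succ, Finset.prod_range_succ]
    refine ⟨ih.1.mul h1, ?_⟩
    rw [ih.1.coeff_mul h1, ih.2]
    simp [HahnSeries.coeff_one, (hγ j).ne']

theorem stage_two (φ : Γ →+ ℝ) (hφ : ∀ x, 0 < φ x → 0 < x) (γ : ℕ → Γ) (hγ : ∀ i, 0 < γ i)
    (c : ℕ → ℝ) (hc : ∀ i, c i ≠ 0)
    (hm : StrictMono fun j => φ (∑ i ∈ Finset.range j, γ i))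
    (hgap : ∀ B : ℝ, ∃ᶠ j in atTop, φ (∑ i ∈ Finset.range j, γ i) + B < φ (γ j))
    (g : HahnSeries Γ ℝ)
    (hg : ∀ j, Van (γ j) (g - ∏ i ∈ Finset.range j, (1 + HahnSeries.single (γ i) (c i)))) :
    ¬ IsAlgebraic (finFld Γ) g := by
  classical
  intro halg
  obtain ⟨n, B, hB, ⟨i0, hi0⟩, hsum⟩ := exists_ode φ g halg
  have hB' : ∀ i, (B i).support.Finite := hB
  set S : Finset Γ := Finset.univ.biUnion fun i => (Set.Finite.toFinset (hB' i)) with hS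
  have hmem' : ∀ a, a ∈ S ↔ ∃ i, (B i).coeff a ≠ 0 := by
    intro a
    simp [hS]
  have hmem : ∀ i a, (B i).coeff a ≠ 0 → a ∈ S := by
    intro i a h
    exact (hmem' a).2 ⟨i, h⟩
  have hSne : S.Nonempty := by
    obtain ⟨a, ha⟩ := HahnSeries.support_nonempty_iff.2 hi0
    exact ⟨a, hmem i0 a ha⟩
  set b := S.max' hSne
  set o := S.min' hSne
  have hub : ∀ i, UBd b (B i) := by
    intro i a ha
    by_contra hne
    exact absurd (S.le_max' a (hmem i a hne)) (not_le.2 ha)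
  have hvan : ∀ i, Van o (B i) := by
    intro i a ha
    by_contra hne
    exact absurd (S.min'_le a (hmem i a hne)) (not_le.2 ha)
  have hb : ∃ i, (B i).coeff b ≠ 0 := (hmem' b).1 (S.max'_mem hSne)
  obtain ⟨i1, hi1⟩ := hb
  set Q : Polynomial ℝ := ∑ i : Fin n, Polynomial.monomial (i : ℕ) ((B i).coeff b) with hQ
  have hQ0 : Q ≠ 0 := by
    intro h
    have h1 := congrArg (fun q => Polynomial.coeff q (i1 : ℕ)) h
    simp only [hQ, Polynomial.finsetSum_coeff, Polynomial.coeff_monomial, Polynomial.coeff_zero] at h1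
    rw [Finset.sum_eq_single i1] at h1
    · simp at h1; exact hi1 h1
    · intro k _ hk
      rw [if_neg]; intro h; exact hk (Fin.ext h)
    · simp
  have hroot : ∀ j, φ (∑ i ∈ Finset.range j, γ i) + (φ b - φ o) < φ (γ j) →
      Q.IsRoot (φ (∑ i ∈ Finset.range j, γ i)) := by
    intro j hj
    set G := ∑ i ∈ Finset.range j, γ i with hG
    set P := ∏ i ∈ Finset.range j, (1 + HahnSeries.single (γ i) (c i)) with hP
    obtain ⟨hPu, hPc⟩ := UBd_prod γ hγ c j
    rw [← hP, ← hG] at hPu hPc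
    have hlt : b + G < o + γ j := by
      have : 0 < (o + γ j) - (b + G) := by
        apply hφ
        simp only [map_sub, map_add]
        linarith
      exact sub_pos.1 this
    have e1 : (∑ i, B i * (hder φ)^[i] P).coeff (b + G) = 0 := by
      have h1 : ∑ i, B i * (hder φ)^[i] P = - ∑ i, B i * (hder φ)^[i] (g - P) := by
        have h2 : ∀ i : Fin n, B i * (hder φ)^[i] (g - P)
            = B i * (hder φ)^[i] g - B i * (hder φ)^[i] P := by
          intro i
          rw [← mul_sub]; congr 1; ext a
          simp [hder_iter_coeff]
        simp only [h2, Finset.sum_sub_distrib, hsum]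
        ring
      have h3 : Van (o + γ j) (∑ i, B i * (hder φ)^[i] (g - P)) := by
        apply Van.sum
        intro i _
        apply (hvan i).mul
        intro a ha
        rw [hder_iter_coeff, hg j a ha, mul_zero]
      rw [h1, HahnSeries.coeff_neg, h3 _ hlt, neg_zero]
    rw [HahnSeries.coeff_sum] at e1
    have e2 : ∀ i : Fin n, (B i * (hder φ)^[i] P).coeff (b + G)
        = (B i).coeff b * φ G ^ (i : ℕ) * ∏ i ∈ Finset.range j, c i := by
      intro i
      have h4 : UBd G ((hder φ)^[i] P) := by
        intro a ha
        rw [hder_iter_coeff, hPu a ha, mul_zero]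
      rw [(hub i).coeff_mul h4, hder_iter_coeff, hPc]; ring
    simp only [e2, ← Finset.sum_mul] at e1
    have e3 : ∏ i ∈ Finset.range j, c i ≠ 0 := Finset.prod_ne_zero_iff.2 fun i _ => hc i
    have e4 := (mul_eq_zero.1 e1).resolve_right e3
    rw [Polynomial.IsRoot, hQ, Polynomial.eval_finsetSum]
    simpa [Polynomial.eval_monomial] using e4
  have hinf : {j | φ (∑ i ∈ Finset.range j, γ i) + (φ b - φ o) < φ (γ j)}.Infinite :=
    Nat.frequently_atTop_iff_infinite.1 (hgap _)
  have hinf2 := hinf.image (f := fun j => φ (∑ i ∈ Finset.range j, γ i)) hm.injective.injOn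
  apply hinf2
  apply (Q.roots.toFinset.finite_toSet).subset
  rintro _ ⟨j, hj, rfl⟩
  simp only [Finset.mem_coe, Multiset.mem_toFinset]
  exact (Polynomial.mem_roots hQ0).2 (hroot j hj)

end HahnPart


section LimPart
variable {Γ : Type*} [AddCommGroup Γ] [LinearOrder Γ] [IsOrderedAddMonoid Γ]

lemma hahn_lim (γ : ℕ → Γ) (hmono : Monotone γ) (hcof : ∀ a, ∃ j, a < γ j)
    (P : ℕ → HahnSeries Γ ℝ) (hP : ∀ j, Van (γ j) (P (j + 1) - P j)) :
    ∃ g : HahnSeries Γ ℝ, ∀ j, Van (γ j) (g - P j) := by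
  have h1 : ∀ j m, Van (γ j) (P (j + m) - P j) := by
    intro j m
    induction m with
    | zero => intro a _; simp
    | succ m ih =>
      have h2 := ((hP (j + m)).mono (hmono (Nat.le_add_right j m))).add ih
      have e : P (j + m + 1) - P (j + m) + (P (j + m) - P j) = P (j + (m + 1)) - P j := by
        rw [sub_add_sub_cancel]; rfl
      rwa [e] at h2
  choose J hJ using hcof
  have h2 : ∀ j a, a < γ j → (P (J a)).coeff a = (P j).coeff a := by
    intro j a ha
    rcases le_total j (J a) with h | h
    · have := h1 j (J a - j) a ha
      rw [Nat.add_sub_of_le h, HahnSeries.coeff_sub] at this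
      linarith
    · have := h1 (J a) (j - J a) a (hJ a)
      rw [Nat.add_sub_of_le h, HahnSeries.coeff_sub] at this
      linarith
  refine ⟨⟨fun a => (P (J a)).coeff a, ?_⟩, ?_⟩
  · intro f
    by_cases h3 : ∃ n, 0 < n ∧ (f 0 : Γ) ≤ f n
    · obtain ⟨n, hn, h4⟩ := h3
      exact ⟨0, n, hn, h4⟩
    · push Not at h3
      have h4 : ∀ n, (f n : Γ) ≤ f 0 := by
        intro n
        rcases Nat.eq_zero_or_pos n with rfl | h
        · exact le_rfl
        · exact (h3 n h).le
      have h5 : ∀ n, (f n : Γ) ∈ (P (J (f 0))).support := by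
        intro n
        have := (f n).2
        rw [Function.mem_support] at this
        rw [HahnSeries.mem_support, ← h2 _ _ ((h4 n).trans_lt (hJ (f 0)))]
        exact this
      obtain ⟨m, n, hmn, h6⟩ := (P (J (f 0))).isPWO_support (fun n => ⟨f n, h5 n⟩)
      exact ⟨m, n, hmn, h6⟩
  · intro j a ha
    rw [HahnSeries.coeff_sub]
    change (P (J a)).coeff a - _ = 0
    rw [h2 j a ha, sub_self]

lemma Van.pow {x : HahnSeries Γ ℝ} (hx : Van 0 x) (n : ℕ) : Van 0 (x ^ n) := by
  induction n with
  | zero =>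
    intro a ha
    rw [pow_zero, HahnSeries.coeff_one, if_neg ha.ne]
  | succ n ih =>
    have := ih.mul hx
    rwa [add_zero, ← pow_succ] at this

lemma Van.pow_sub {γ : Γ} {x y : HahnSeries Γ ℝ} (hx : Van 0 x) (hy : Van 0 y) (h : Van γ (x - y)) (n : ℕ) :
    Van γ (x ^ n - y ^ n) := by
  induction n with
  | zero => intro a _; simp
  | succ n ih =>
    have h1 := (Van.pow hx n).mul h
    have h2 := hy.mul ih
    rw [zero_add] at h1 h2
    have h3 := h1.add h2
    have e : x ^ n * (x - y) + y * (x ^ n - y ^ n) = x ^ (n + 1) - y ^ (n + 1) := by ring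
    rwa [e] at h3

lemma alg_of (g : HahnSeries Γ ℝ) (n : ℕ) (A : Fin (n + 1) → HahnSeries Γ ℝ)
    (hA : ∀ i, A i ∈ finFld Γ) (hne : ∃ i, A i ≠ 0)
    (hsum : ∑ i : Fin (n + 1), A i * g ^ (n - (i : ℕ)) = 0) : IsAlgebraic (finFld Γ) g := by
  classical
  obtain ⟨i0, hi0⟩ := hne
  refine ⟨∑ i : Fin (n + 1), Polynomial.monomial (n - (i : ℕ)) (⟨A i, hA i⟩ : finFld Γ), ?_, ?_⟩
  · intro h
    have h1 := congrArg (fun p => Polynomial.coeff p (n - (i0 : ℕ))) h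
    simp only [Polynomial.finsetSum_coeff, Polynomial.coeff_monomial, Polynomial.coeff_zero] at h1
    rw [Finset.sum_eq_single i0] at h1
    · rw [if_pos rfl] at h1
      exact hi0 (congrArg Subtype.val h1)
    · intro b _ hb
      rw [if_neg]
      intro h2
      apply hb
      ext
      have := b.2
      have := i0.2
      omega
    · simp
  · rw [map_sum, ← hsum]
    refine Finset.sum_congr rfl fun i _ => ?_
    rw [Polynomial.aeval_monomial]
    rfl

end LimPart

lemma gap_real (f : ℕ → ℝ) (hf : ∀ j, ((5 : ℝ) / 2) ^ j ≤ 1 + ∑ i ∈ Finset.range j, f i) (B : ℝ) :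
    ∃ᶠ j in atTop, (∑ i ∈ Finset.range j, f i) + B < f j := by
  intro hcon
  obtain ⟨J, hJ⟩ := eventually_atTop.1 hcon
  have h1 : ∀ m, (∑ i ∈ Finset.range (J + m), f i) + B ≤ 2 ^ m * ((∑ i ∈ Finset.range J, f i) + B) := by
    intro m
    induction m with
    | zero => simp
    | succ m ih =>
      have := hJ (J + m) (by omega)
      rw [← add_assoc, Finset.sum_range_succ, pow_succ]
      linarith
  set X := (∑ i ∈ Finset.range J, f i) + B with hX
  have h2 : ∀ m : ℕ, ((5 : ℝ) / 2) ^ m ≤ 2 ^ m * (|X| + |B| + 1) := by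
    intro m
    have h3 := hf (J + m)
    have h4 := h1 m
    have h5 : ((5 : ℝ) / 2) ^ m ≤ (5 / 2) ^ (J + m) := pow_le_pow_right₀ (by norm_num) (by omega)
    have h6 : (1 : ℝ) ≤ 2 ^ m := one_le_pow₀ (by norm_num)
    have h7 : (2 : ℝ) ^ m * X ≤ 2 ^ m * |X| := by gcongr; exact le_abs_self X
    have h8 : |B| ≤ (2 : ℝ) ^ m * |B| := le_mul_of_one_le_left (abs_nonneg _) h6
    have h9 := neg_abs_le B
    nlinarith
  obtain ⟨m, hm⟩ := pow_unbounded_of_one_lt (|X| + |B| + 1) (y := (5 / 4 : ℝ)) (by norm_num)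
  have h3 := h2 m
  have e : ((5 : ℝ) / 2) ^ m = 2 ^ m * (5 / 4) ^ m := by rw [← mul_pow]; norm_num
  rw [e] at h3
  have := le_of_mul_le_mul_left h3 (by positivity)
  linarith


section HyperPart
open Polynomial Hyperreal ArchimedeanClass

lemma exists_hpi : ∃ p : Hyperreal →ₗ[ℚ] ℚ, p 1 = 1 := by
  obtain ⟨p, hp⟩ := LinearMap.exists_leftInverse_of_injective (Algebra.linearMap ℚ Hyperreal)
    (LinearMap.ker_eq_bot.2 (algebraMap ℚ Hyperreal).injective)
  refine ⟨p, ?_⟩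
  have := LinearMap.congr_fun hp 1
  simpa using this

noncomputable def hpi : Hyperreal →ₗ[ℚ] ℚ := Classical.choose exists_hpi

lemma hpi_one : hpi 1 = 1 := Classical.choose_spec exists_hpi

lemma hpi_int (m : ℤ) : hpi (m : Hyperreal) = m := by
  have : (m : Hyperreal) = (m : ℚ) • (1 : Hyperreal) := by rw [Rat.smul_def]; simp
  rw [this, map_smul, hpi_one]; simp

lemma ratcast_real (q : ℚ) : (q : Hyperreal) = ((q : ℝ) : Hyperreal) :=
  (map_ratCast (coeRingHom : ℝ →+* Hyperreal) q).symm

namespace Dat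
variable (D : Dat)

noncomputable def GG : AddSubgroup Hyperreal where
  carrier := {x | (∃ e : ℕ → ℤ, x = ofSeq (fun t => (e t : ℝ)) - (hpi (ofSeq (fun t => (e t : ℝ))) : Hyperreal)) ∧
    ∃ C : ℝ, |x| ≤ (C : Hyperreal) * D.T}
  zero_mem' := by
    refine ⟨⟨fun _ => 0, ?_⟩, 0, by simp⟩
    have : ofSeq (fun _ => ((0 : ℤ) : ℝ)) = 0 := by simp; rfl
    rw [this]; simp
  add_mem' := by
    rintro x y ⟨⟨e, he⟩, C, hC⟩ ⟨⟨e', he'⟩, C', hC'⟩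
    refine ⟨⟨fun t => e t + e' t, ?_⟩, C + C', ?_⟩
    · have : ofSeq (fun t => ((e t + e' t : ℤ) : ℝ)) = ofSeq (fun t => (e t : ℝ)) + ofSeq (fun t => (e' t : ℝ)) := by
        push_cast; rfl
      rw [this, map_add, he, he']; push_cast; ring
    · rw [Hyperreal.coe_add, add_mul]
      exact (abs_add_le _ _).trans (add_le_add hC hC')
  neg_mem' := by
    rintro x ⟨⟨e, he⟩, C, hC⟩
    refine ⟨⟨fun t => - e t, ?_⟩, C, by rwa [abs_neg]⟩
    have : ofSeq (fun t => ((- e t : ℤ) : ℝ)) = - ofSeq (fun t => (e t : ℝ)) := by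
        push_cast; rfl
    rw [this, map_neg, he]; push_cast; ring

lemma GG_inf {x : Hyperreal} (hx : x ∈ D.GG) {r : ℝ} (h : |x| ≤ r) : x = 0 := by
  obtain ⟨⟨e, he⟩, -⟩ := hx
  set q := hpi (ofSeq (fun t => (e t : ℝ))) with hq
  have h1 : |ofSeq (fun t => (e t : ℝ))| ≤ ((r + |(q : ℝ)| : ℝ) : Hyperreal) := by
    have : ofSeq (fun t => (e t : ℝ)) = x + (q : Hyperreal) := by rw [he]; ring
    rw [this, Hyperreal.coe_add, Hyperreal.coe_abs, ← ratcast_real]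
    exact (abs_add_le _ _).trans (by gcongr)
  rw [hyp_abs] at h1
  obtain ⟨n, hn⟩ := exists_nat_gt (r + |(q : ℝ)|)
  have e1 : ((r + |(q : ℝ)| : ℝ) : Hyperreal) = ofSeq (fun _ => (r + |(q : ℝ)|)) := rfl
  rw [e1] at h1
  have h2 : ∀ᶠ t in hyperfilter ℕ, ∃ m ∈ Set.Icc (-(n : ℤ)) n, e t = m := by
    filter_upwards [ofSeq_le_ofSeq.1 h1] with t ht
    refine ⟨e t, ?_, rfl⟩
    have h3 := (abs_le.1 (ht.trans hn.le))
    constructor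
    · exact_mod_cast h3.1
    · exact_mod_cast h3.2
  rw [Ultrafilter.eventually_exists_mem_iff (Set.finite_Icc _ _)] at h2
  obtain ⟨m, -, hm⟩ := h2
  have h3 : ofSeq (fun t => (e t : ℝ)) = (m : Hyperreal) := by
    have : (m : Hyperreal) = ofSeq (fun _ => (m : ℝ)) := rfl
    rw [this, hyp_eq]
    filter_upwards [hm] with t ht
    rw [ht]
  rw [he, hq, h3, hpi_int]; simp

lemma GG_nonneg {x : Hyperreal} (hx : x ∈ D.GG) {r : ℝ} (h : (r : Hyperreal) ≤ x) : 0 ≤ x := by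
  by_contra hneg
  push Not at hneg
  have h1 : |x| ≤ ((-r : ℝ) : Hyperreal) := by
    rw [abs_of_neg hneg, Hyperreal.coe_neg]; linarith
  exact hneg.ne (D.GG_inf hx h1)

lemma GG_big {x : Hyperreal} (hx : x ∈ D.GG) (h : 0 < x) (r : ℝ) : (r : Hyperreal) < x := by
  by_contra hneg
  push Not at hneg
  have h1 : |x| ≤ (r : Hyperreal) := by rwa [abs_of_pos h]
  exact h.ne' (D.GG_inf hx h1)

lemma T_one : 1 ≤ D.T := by simpa using (D.T_inf 1).le

noncomputable def red (e : Hyperreal) : Hyperreal := e - (hpi e : Hyperreal)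

lemma red_mem {e : Hyperreal} {s : ℕ → ℕ} (hs : e = ofSeq (fun t => (s t : ℝ))) {C : ℝ}
    (hC : e ≤ (C : Hyperreal) * D.T) : red e ∈ D.GG := by
  refine ⟨⟨fun t => s t, ?_⟩, C + |(hpi e : ℝ)|, ?_⟩
  · rw [red, hs]; simp
  · have h0 : 0 ≤ e := by
      rw [hs]
      have : ofSeq (fun _ => 0) ≤ ofSeq (fun t => (s t : ℝ)) :=
        ofSeq_le_ofSeq.2 (Eventually.of_forall fun t => Nat.cast_nonneg _)
      exact this
    rw [red, Hyperreal.coe_add, add_mul]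
    refine (abs_sub _ _).trans ?_
    rw [abs_of_nonneg h0]
    refine add_le_add hC ?_
    rw [ratcast_real, ← Hyperreal.coe_abs]
    exact le_mul_of_one_le_right (Hyperreal.coe_nonneg.2 (abs_nonneg _)) D.T_one

lemma red_SS {e : Hyperreal} (he : e ∈ D.SS) : red e ∈ D.GG := by
  obtain ⟨s, hs⟩ := D.SS_nat he
  obtain ⟨C, hC⟩ := D.SS_up he
  exact D.red_mem hs hC

lemma E_red (e : Hyperreal) : D.E e = ((D.α ^ ((hpi e : ℚ) : ℝ) : ℝ) : Hyperreal) * D.E (red e) := by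
  have : e = ((hpi e : ℝ) : Hyperreal) + red e := by rw [red, ratcast_real]; ring
  conv_lhs => rw [this]
  rw [E_add, E_coe]

noncomputable def gam (i : ℕ) : D.GG := ⟨red (D.kk i), D.red_SS (D.kk_SS i)⟩
noncomputable def cc (i : ℕ) : ℝ := D.α ^ ((hpi (D.kk i) : ℚ) : ℝ)

lemma cc_pos (i : ℕ) : 0 < D.cc i := Real.rpow_pos_of_pos D.hα0 _

lemma mk_of_le {x : Hyperreal} {C : ℝ} (h : |x| ≤ C) : 0 ≤ ArchimedeanClass.mk x := by
  obtain ⟨h1, h2⟩ := abs_le.1 h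
  have h3 : coeRingHom (-C) ≤ x := by
    change ((-C : ℝ) : Hyperreal) ≤ x
    rwa [Hyperreal.coe_neg]
  exact mk_nonneg_of_le_of_le_of_archimedean coeRingHom h3 h2

lemma mk_div_T {x : Hyperreal} {C : ℝ} (h : |x| ≤ (C : Hyperreal) * D.T) : 0 ≤ ArchimedeanClass.mk (x / D.T) := by
  apply mk_of_le (C := C)
  rw [abs_div, abs_of_pos D.T_pos]
  exact (div_le_iff₀ D.T_pos).2 h

noncomputable def phi : D.GG →+ ℝ where
  toFun x := stdPart ((x : Hyperreal) / D.T)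
  map_zero' := by simp
  map_add' := by
    intro x y
    obtain ⟨-, C, hC⟩ := x.2
    obtain ⟨-, C', hC'⟩ := y.2
    rw [← stdPart_add (D.mk_div_T hC) (D.mk_div_T hC'), ← add_div]
    rfl

lemma phi_pos (x : D.GG) (h : 0 < D.phi x) : 0 < x := by
  by_contra hneg
  push Not at hneg
  have h1 : (x : Hyperreal) ≤ 0 := hneg
  have h2 : (x : Hyperreal) / D.T ≤ 0 := div_nonpos_of_nonpos_of_nonneg h1 D.T_pos.le
  have := stdPart_nonpos h2
  exact absurd h (not_lt.2 this)

lemma kk_abs (i : ℕ) : ∃ C : ℝ, |D.kk i| ≤ (C : Hyperreal) * D.T := by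
  obtain ⟨C, hC⟩ := D.kk_up i
  exact ⟨C, by rwa [abs_of_pos (D.T_pos.trans_le (D.kk_T i))]⟩

lemma stdPart_real_div_T (r : ℝ) : stdPart ((r : Hyperreal) / D.T) = 0 := by
  apply stdPart_eq coeRingHom
  · intro s hs
    change (s : Hyperreal) ≤ _
    rw [le_div_iff₀ D.T_pos]
    have h1 := D.T_inf (|r| / -s)
    have h2 : ((|r| / -s : ℝ) : Hyperreal) * ((-s : ℝ) : Hyperreal) ≤ D.T * ((-s : ℝ) : Hyperreal) :=
      mul_le_mul_of_nonneg_right h1.le (Hyperreal.coe_nonneg.2 (by linarith))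
    rw [← Hyperreal.coe_mul, div_mul_cancel₀ _ (by linarith), Hyperreal.coe_neg] at h2
    have h3 : ((-|r| : ℝ) : Hyperreal) ≤ (r : Hyperreal) := coe_le_coe.2 (neg_abs_le r)
    rw [Hyperreal.coe_neg] at h3
    linarith
  · intro s hs
    change _ ≤ (s : Hyperreal)
    rw [div_le_iff₀ D.T_pos]
    have h1 := D.T_inf (|r| / s)
    have h2 : ((|r| / s : ℝ) : Hyperreal) * ((s : ℝ) : Hyperreal) ≤ D.T * ((s : ℝ) : Hyperreal) :=
      mul_le_mul_of_nonneg_right h1.le (Hyperreal.coe_nonneg.2 (by linarith))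
    rw [← Hyperreal.coe_mul, div_mul_cancel₀ _ (by linarith)] at h2
    have h3 : (r : Hyperreal) ≤ ((|r| : ℝ) : Hyperreal) := coe_le_coe.2 (le_abs_self r)
    linarith

lemma mk_real_div_T (r : ℝ) : 0 ≤ ArchimedeanClass.mk ((r : Hyperreal) / D.T) := by
  apply D.mk_div_T (C := |r|)
  rw [← Hyperreal.coe_abs]
  exact le_mul_of_one_le_right (Hyperreal.coe_nonneg.2 (abs_nonneg _)) D.T_one

lemma phi_gam (i : ℕ) : D.phi (D.gam i) = stdPart (D.kk i / D.T) := by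
  obtain ⟨C, hC⟩ := D.kk_abs i
  change stdPart ((D.kk i - ((hpi (D.kk i) : ℚ) : Hyperreal)) / D.T) = _
  rw [sub_div, ratcast_real, stdPart_sub (D.mk_div_T hC) (D.mk_real_div_T _), stdPart_real_div_T, sub_zero]

lemma phi_gam_ge (i : ℕ) : 1 ≤ D.phi (D.gam i) := by
  obtain ⟨C, hC⟩ := D.kk_abs i
  rw [phi_gam]
  apply le_stdPart_of_le coeRingHom (D.mk_div_T hC)
  rw [map_one, le_div_iff₀ D.T_pos, one_mul]
  exact D.kk_T i

lemma phi_sum (j : ℕ) : ((5 : ℝ) / 2) ^ j ≤ 1 + ∑ i ∈ Finset.range j, D.phi (D.gam i) := by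
  have h1 : ∀ j : ℕ, 0 ≤ ArchimedeanClass.mk ((∑ i ∈ Finset.range j, D.kk i) / D.T) ∧
      stdPart ((∑ i ∈ Finset.range j, D.kk i) / D.T) = ∑ i ∈ Finset.range j, D.phi (D.gam i) := by
    intro j
    induction j with
    | zero => simp
    | succ j ih =>
      obtain ⟨C, hC⟩ := D.kk_abs j
      rw [Finset.sum_range_succ, Finset.sum_range_succ, add_div]
      refine ⟨(le_min ih.1 (D.mk_div_T hC)).trans (min_le_mk_add _ _), ?_⟩
      rw [stdPart_add ih.1 (D.mk_div_T hC), ih.2, phi_gam]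
  obtain ⟨h2, h3⟩ := h1 j
  have h4 : ((5 : ℝ) / 2) ^ j - 1 ≤ stdPart ((∑ i ∈ Finset.range j, D.kk i) / D.T) := by
    apply le_stdPart_of_le coeRingHom h2
    rw [le_div_iff₀ D.T_pos, map_sub, map_one, map_pow, sub_mul, one_mul]
    have := D.sum_kk j
    change ((5 / 2 : ℝ) : Hyperreal) ^ j * D.T - D.T ≤ _
    linarith
  linarith

lemma gam_pos (i : ℕ) : 0 < D.gam i := D.phi_pos _ (by linarith [D.phi_gam_ge i])

lemma gam_mono : Monotone D.gam := by
  intro i j h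
  have h1 := D.kk_mono h
  have h2 : ((D.gam j - D.gam i : D.GG) : Hyperreal) = D.kk j - D.kk i - (((hpi (D.kk j) - hpi (D.kk i) : ℚ) : ℝ) : Hyperreal) := by
    rw [← ratcast_real]
    change (D.kk j - ((hpi (D.kk j) : ℚ) : Hyperreal)) - (D.kk i - ((hpi (D.kk i) : ℚ) : Hyperreal)) = _
    push_cast; ring
  have h3 : 0 ≤ ((D.gam j - D.gam i : D.GG) : Hyperreal) := by
    apply D.GG_nonneg (D.gam j - D.gam i).2 (r := -((hpi (D.kk j) - hpi (D.kk i) : ℚ) : ℝ))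
    rw [h2, Hyperreal.coe_neg]; linarith
  have h4 : 0 ≤ D.gam j - D.gam i := h3
  exact sub_nonneg.1 h4

lemma gam_cof (a : D.GG) : ∃ j, a < D.gam j := by
  obtain ⟨-, C, hC⟩ := a.2
  obtain ⟨j, hj⟩ := exists_nat_gt (4 * (C + 1))
  refine ⟨j, ?_⟩
  change (a : Hyperreal) < D.kk j - ((hpi (D.kk j) : ℚ) : Hyperreal)
  have h1 := D.kk_low j
  have h2 : ((C + 1 : ℝ) : Hyperreal) * D.T ≤ (((j + 1 : ℝ) ^ 2 / 4 : ℝ) : Hyperreal) * D.T := by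
    apply mul_le_mul_of_nonneg_right _ D.T_pos.le
    rw [coe_le_coe]
    have : (0 : ℝ) ≤ j := Nat.cast_nonneg _
    nlinarith
  have h3 := D.T_inf ((hpi (D.kk j) : ℚ) : ℝ)
  rw [ratcast_real]
  rw [Hyperreal.coe_add, add_mul, Hyperreal.coe_one, one_mul] at h2
  have h4 := le_abs_self (a : Hyperreal)
  linarith

end Dat
end HyperPart


section HyperPart
open Polynomial Hyperreal

namespace Dat
variable (D : Dat)

noncomputable def ev : AddMonoidAlgebra ℝ D.GG →+* Hyperreal :=
  AddMonoidAlgebra.liftNCRingHom (coeRingHom : ℝ →+* Hyperreal)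
    { toFun := fun a => D.E (a.toAdd : D.GG)
      map_one' := D.E_zero
      map_mul' := fun _ _ => D.E_add _ _ } (fun _ _ => Commute.all _ _)

noncomputable def io : AddMonoidAlgebra ℝ D.GG →+* HahnSeries D.GG ℝ :=
  AddMonoidAlgebra.liftNCRingHom HahnSeries.C
    { toFun := fun a => HahnSeries.single a.toAdd (1 : ℝ)
      map_one' := rfl
      map_mul' := fun a b => by
        rw [HahnSeries.single_mul_single, one_mul]; rfl } (fun _ _ => Commute.all _ _)

lemma ev_single (a : D.GG) (c : ℝ) : D.ev (AddMonoidAlgebra.single a c) = (c : Hyperreal) * D.E a := by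
  rw [ev, AddMonoidAlgebra.liftNCRingHom_single]; rfl

lemma io_single (a : D.GG) (c : ℝ) : D.io (AddMonoidAlgebra.single a c) = HahnSeries.single a c := by
  rw [io, AddMonoidAlgebra.liftNCRingHom_single]
  change HahnSeries.C c * HahnSeries.single a 1 = _
  rw [HahnSeries.C_apply, HahnSeries.single_mul_single, zero_add, mul_one]

lemma io_coeff (p : AddMonoidAlgebra ℝ D.GG) (a : D.GG) : (D.io p).coeff a = p.coeff a := by
  classical
  induction p using AddMonoidAlgebra.induction_linear with
  | zero => simp
  | add x y hx hy => rw [map_add, HahnSeries.coeff_add, hx, hy]; rfl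
  | single b c =>
    rw [io_single, AddMonoidAlgebra.coeff_single]
    rcases eq_or_ne a b with rfl | hab
    · simp
    · rw [HahnSeries.coeff_single_of_ne hab, Finsupp.single_eq_of_ne hab]

lemma io_fin (p : AddMonoidAlgebra ℝ D.GG) : D.io p ∈ finFld D.GG := by
  apply Subfield.subset_closure
  have : (D.io p).support.Finite := by
    refine p.coeff.support.finite_toSet.subset ?_
    intro a ha
    rw [HahnSeries.mem_support, io_coeff] at ha
    simpa using ha
  exact this

lemma ev_sum (p : AddMonoidAlgebra ℝ D.GG) :
    D.ev p = ∑ a ∈ p.coeff.support, ((p.coeff a : ℝ) : Hyperreal) * D.E a := by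
  conv_lhs => rw [← AddMonoidAlgebra.sum_coeff_single p]
  rw [Finsupp.sum, map_sum]
  simp only [ev_single]

def SM : AddSubgroup Hyperreal where
  carrier := {x | ∀ e : ℝ, 0 < e → |x| ≤ (e : Hyperreal)}
  zero_mem' := fun e he => by simpa using he.le
  add_mem' := by
    intro x y hx hy e he
    have h1 := hx (e / 2) (by linarith)
    have h2 := hy (e / 2) (by linarith)
    refine (abs_add_le _ _).trans ((add_le_add h1 h2).trans ?_)
    rw [← Hyperreal.coe_add, add_halves]
  neg_mem' := by
    intro x hx e he
    rw [abs_neg]; exact hx e he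

lemma SM_mul (r : ℝ) {x : Hyperreal} (hx : x ∈ SM) : (r : Hyperreal) * x ∈ SM := by
  intro e he
  have h1 := hx (e / (|r| + 1)) (by positivity)
  rw [abs_mul, ← Hyperreal.coe_abs]
  have h2 : ((|r| : ℝ) : Hyperreal) * |x| ≤ ((|r| : ℝ) : Hyperreal) * ((e / (|r| + 1) : ℝ) : Hyperreal) :=
    mul_le_mul_of_nonneg_left h1 (Hyperreal.coe_nonneg.2 (abs_nonneg _))
  refine h2.trans ?_
  rw [← Hyperreal.coe_mul, coe_le_coe, mul_div_assoc', div_le_iff₀ (by positivity)]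
  nlinarith [abs_nonneg r]

lemma SM_le {x y : Hyperreal} (hy : y ∈ SM) (h : |x| ≤ y) : x ∈ SM := fun e he =>
  h.trans ((le_abs_self y).trans (hy e he))

lemma SM_E (a : D.GG) (ha : 0 < a) : D.E a ∈ SM := by
  intro e he
  rw [abs_of_pos (D.E_pos _)]
  exact (D.E_small (D.GG_big a.2 ha) he).le

lemma E_sub (a b : D.GG) : D.E a = D.E b * D.E ((a - b : D.GG) : Hyperreal) := by
  rw [← E_add]; congr 1
  push_cast; ring

lemma dom (p : AddMonoidAlgebra ℝ D.GG) (γ : D.GG) (h : D.ev p ∈ D.O γ) : Van γ (D.io p) := by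
  classical
  intro a ha
  rw [io_coeff]
  by_contra hne
  have hmem : a ∈ p.coeff.support := Finsupp.mem_support_iff.2 hne
  set b := p.coeff.support.min' ⟨a, hmem⟩ with hb
  have hbm : b ∈ p.coeff.support := Finset.min'_mem _ _
  have hba : b ≤ a := Finset.min'_le _ _ hmem
  obtain ⟨C, hC⟩ := h
  have hEb := D.E_pos b
  have e1 : D.ev p = D.E b * ∑ c ∈ p.coeff.support, ((p.coeff c : ℝ) : Hyperreal) * D.E ((c - b : D.GG) : Hyperreal) := by
    rw [ev_sum, Finset.mul_sum]
    refine Finset.sum_congr rfl fun c _ => ?_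
    rw [D.E_sub c b]; ring
  have h1 : ∑ c ∈ p.coeff.support, ((p.coeff c : ℝ) : Hyperreal) * D.E ((c - b : D.GG) : Hyperreal) ∈ SM := by
    apply SM_le (SM_mul C (D.SM_E (γ - b) (sub_pos.2 (hba.trans_lt ha))))
    rw [e1, abs_mul, abs_of_pos hEb, D.E_sub γ b] at hC
    have : D.E b * |∑ c ∈ p.coeff.support, ((p.coeff c : ℝ) : Hyperreal) * D.E ((c - b : D.GG) : Hyperreal)| ≤
      D.E b * ((C : Hyperreal) * D.E ((γ - b : D.GG) : Hyperreal)) := hC.trans (le_of_eq (by ring))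
    exact le_of_mul_le_mul_left this hEb
  rw [← Finset.add_sum_erase _ _ hbm] at h1
  have h2 : ∑ c ∈ p.coeff.support.erase b, ((p.coeff c : ℝ) : Hyperreal) * D.E ((c - b : D.GG) : Hyperreal) ∈ SM := by
    refine SM.sum_mem fun c hc => SM_mul _ (D.SM_E _ (sub_pos.2 ?_))
    obtain ⟨hc1, hc2⟩ := Finset.mem_erase.1 hc
    exact lt_of_le_of_ne (Finset.min'_le _ _ hc2) hc1.symm
  have h3 := SM.sub_mem h1 h2
  rw [add_sub_cancel_right, sub_self] at h3
  have e0 : D.E ((0 : D.GG) : Hyperreal) = 1 := D.E_zero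
  rw [e0, mul_one] at h3
  have hpb : p.coeff b ≠ 0 := Finsupp.mem_support_iff.1 hbm
  have h4 := h3 (|p.coeff b| / 2) (by positivity)
  rw [← Hyperreal.coe_abs, coe_le_coe] at h4
  have : 0 < |p.coeff b| := abs_pos.2 hpb
  linarith

lemma Minf_ev {x : Hyperreal} (hx : x ∈ D.Minf) : ∃ p, D.ev p = x := by
  induction hx using Submodule.span_induction with
  | mem x h =>
    obtain ⟨e, he, rfl⟩ := h
    refine ⟨AddMonoidAlgebra.single ⟨red e, D.red_SS he⟩ (D.α ^ ((hpi e : ℚ) : ℝ)), ?_⟩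
    rw [ev_single, ← E_red]
  | zero => exact ⟨0, map_zero _⟩
  | add x y _ _ hx hy =>
    obtain ⟨p, rfl⟩ := hx
    obtain ⟨q, rfl⟩ := hy
    exact ⟨p + q, map_add _ _ _⟩
  | smul a x _ hx =>
    obtain ⟨p, rfl⟩ := hx
    refine ⟨AddMonoidAlgebra.single 0 (a : ℝ) * p, ?_⟩
    rw [map_mul, ev_single, Rat.smul_def, ratcast_real]
    have e0 : D.E ((0 : D.GG) : Hyperreal) = 1 := D.E_zero
    rw [e0, mul_one]

noncomputable def PA (j : ℕ) : AddMonoidAlgebra ℝ D.GG :=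
  ∏ i ∈ Finset.range j, (1 + AddMonoidAlgebra.single (D.gam i) (D.cc i))

lemma E_kk_gam (i : ℕ) : D.E (D.kk i) = (D.cc i : Hyperreal) * D.E (D.gam i) := D.E_red _

lemma ev_PA (j : ℕ) : D.ev (D.PA j) = D.PJ j := by
  rw [PA, PJ, map_prod]
  refine Finset.prod_congr rfl fun i _ => ?_
  rw [map_add, map_one, ev_single, ← E_kk_gam]

lemma io_PA (j : ℕ) : D.io (D.PA j) = ∏ i ∈ Finset.range j, (1 + HahnSeries.single (D.gam i) (D.cc i)) := by
  rw [PA, map_prod]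
  refine Finset.prod_congr rfl fun i _ => ?_
  rw [map_add, map_one, io_single]

lemma O_gam (j : ℕ) : D.O (D.kk j) ≤ D.O (D.gam j) := by
  rintro x ⟨C, hC⟩
  refine ⟨C * D.cc j, ?_⟩
  rw [E_kk_gam] at hC
  rw [Hyperreal.coe_mul, mul_assoc]; exact hC

lemma O_pow_sub {v x y : Hyperreal} (hx : x ∈ D.O 0) (hy : y ∈ D.O 0) (h : x - y ∈ D.O v) (n : ℕ) :
    x ^ n - y ^ n ∈ D.O v := by
  induction n with
  | zero => simp
  | succ n ih =>
    have e : x ^ (n + 1) - y ^ (n + 1) = x ^ n * (x - y) + y * (x ^ n - y ^ n) := by ring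
    rw [e]
    exact Submodule.add_mem _ (D.O_mul_zero (D.pow_O_zero hx n) h) (D.O_mul_zero hy ih)

lemma Van_of_O {p : AddMonoidAlgebra ℝ D.GG} (h : D.ev p ∈ D.O 0) : Van 0 (D.io p) := D.dom p 0 h

theorem contra (halg : IsAlgebraic ℚ D.L) : False := by
  obtain ⟨n, A, ⟨i0, hi0⟩, hA, hsum⟩ := D.stage_one halg
  choose a ha using fun i => D.Minf_ev (hA i)
  have hPV : ∀ j, Van 0 (D.io (D.PA j)) := fun j => D.Van_of_O (by rw [ev_PA]; exact D.PJ_O j)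
  obtain ⟨g, hg⟩ := hahn_lim D.gam D.gam_mono D.gam_cof (fun j => D.io (D.PA j)) (by
    intro j
    have e : D.io (D.PA (j + 1)) - D.io (D.PA j) = D.io (D.PA j) * HahnSeries.single (D.gam j) (D.cc j) := by
      rw [io_PA, io_PA, Finset.prod_range_succ]; ring
    simp only [e]
    have h1 : Van (D.gam j) (HahnSeries.single (D.gam j) (D.cc j)) := by
      intro b hb
      exact HahnSeries.coeff_single_of_ne hb.ne
    have := (hPV j).mul h1
    rwa [zero_add] at this)
  have hgV : Van 0 g := by
    have h1 := ((hg 0).mono (D.gam_pos 0).le).add (hPV 0)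
    simpa using h1
  set l : Fin (n + 1) → AddMonoidAlgebra ℝ D.GG := fun i => AddMonoidAlgebra.single 0 (D.L ^ (i : ℕ)) * a i with hl
  have evl : ∀ i, D.ev (l i) = (D.L : Hyperreal) ^ (i : ℕ) * A i := by
    intro i
    have e0 : D.E ((0 : D.GG) : Hyperreal) = 1 := D.E_zero
    rw [hl, map_mul, ev_single, e0, mul_one, ha]; rfl
  clear_value l
  have evO : ∀ i, D.ev (l i) ∈ D.O 0 := by
    intro i
    rw [evl]
    exact D.O_mul_zero (D.pow_O_zero (D.coe_O_zero _) _) (D.Minf_O (hA i))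
  have hξg : D.ξ * D.g = D.L := by
    rw [Dat.g, mul_div_cancel₀ _ D.ξ_pos.ne']
  have hs2 : ∑ i : Fin (n + 1), D.ev (l i) * D.g ^ (n - (i : ℕ)) = 0 := by
    have : (∑ i : Fin (n + 1), D.ξ ^ (i : ℕ) * A i) * D.g ^ n = 0 := by rw [hsum, zero_mul]
    rw [← this, Finset.sum_mul]
    refine Finset.sum_congr rfl fun i _ => ?_
    rw [evl, ← hξg, mul_pow]
    have : D.g ^ n = D.g ^ (i : ℕ) * D.g ^ (n - (i : ℕ)) := by
      rw [← pow_add]; congr 1; have := i.2; omega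
    rw [this]; ring
  have hV : ∀ j, Van (D.gam j) (∑ i : Fin (n + 1), D.io (l i) * g ^ (n - (i : ℕ))) := by
    intro j
    have h1 : Van (D.gam j) (D.io (∑ i : Fin (n + 1), l i * D.PA j ^ (n - (i : ℕ)))) := by
      apply D.dom
      have e : D.ev (∑ i : Fin (n + 1), l i * D.PA j ^ (n - (i : ℕ))) =
          - ∑ i : Fin (n + 1), D.ev (l i) * (D.g ^ (n - (i : ℕ)) - D.PJ j ^ (n - (i : ℕ))) := by
        simp only [mul_sub, Finset.sum_sub_distrib]
        rw [hs2, map_sum, zero_sub, neg_neg]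
        refine Finset.sum_congr rfl fun i _ => ?_
        rw [map_mul, map_pow, ev_PA]
      rw [e]
      refine Submodule.neg_mem _ (Submodule.sum_mem _ fun i _ => D.O_mul_zero (evO i) ?_)
      exact D.O_pow_sub D.g_O (D.PJ_O j) (D.O_gam j ⟨_, D.g_sub j⟩) _
    have h2 : Van (D.gam j) (∑ i : Fin (n + 1), D.io (l i) * (g ^ (n - (i : ℕ)) - D.io (D.PA j) ^ (n - (i : ℕ)))) := by
      refine Van.sum fun i _ => ?_
      have := (D.Van_of_O (evO i)).mul (Van.pow_sub hgV (hPV j) (hg j) (n - (i : ℕ)))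
      rwa [zero_add] at this
    have h3 := h1.add h2
    convert h3 using 1
    rw [map_sum, ← Finset.sum_add_distrib]
    refine Finset.sum_congr rfl fun i _ => ?_
    rw [map_mul, map_pow]; ring
  have hG : ∑ i : Fin (n + 1), D.io (l i) * g ^ (n - (i : ℕ)) = 0 := by
    ext b
    obtain ⟨j, hj⟩ := D.gam_cof b
    exact hV j b hj
  have hal : IsAlgebraic (finFld D.GG) g := by
    refine alg_of g n (fun i => D.io (l i)) (fun i => D.io_fin _) ⟨i0, ?_⟩ hG
    intro h0
    have h1 : l i0 = 0 := by
      ext b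
      rw [← io_coeff, h0]; rfl
    have h2 := evl i0
    rw [h1, map_zero] at h2
    have hL : (D.L : Hyperreal) ≠ 0 := (coe_pos.2 (by linarith [D.one_le_L])).ne'
    exact (mul_ne_zero (pow_ne_zero _ hL) hi0) h2.symm
  refine stage_two D.phi D.phi_pos D.gam D.gam_pos D.cc (fun i => (D.cc_pos i).ne') ?_ ?_ g ?_ hal
  · apply strictMono_nat_of_lt_succ
    intro j
    simp only [Finset.sum_range_succ, map_add]
    linarith [D.phi_gam_ge j]
  · intro B
    simp only [map_sum]
    exact gap_real (fun i => D.phi (D.gam i)) D.phi_sum B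
  · intro j
    rw [← io_PA]; exact hg j

end Dat
end HyperPart


/-- (Example `trans of psi`.) Let `ψ` be the supergolden ratio,
the unique real root of `x³ - x² - 1`. If `{h_n}` is a strictly increasing
sequence of positive integers with `h_n ≥ (8/3)^n` infinitely often, then
`∏ (1 + ψ^(-h_n))` converges to a transcendental number. -/
theorem stmt_19 (ψ : ℝ) (hψ : ψ ^ 3 - ψ ^ 2 - 1 = 0)
    (h : ℕ → ℕ)
    (hpos : ∀ n : ℕ, 1 ≤ n → 0 < h n)
    (hmono : ∀ n : ℕ, 1 ≤ n → h n < h (n + 1))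
    (hgrow : ∃ᶠ n : ℕ in atTop, ((8 : ℝ) / 3) ^ n ≤ (h n : ℝ)) :
    ∃ L : ℝ,
      Tendsto (fun N => ∏ n ∈ Finset.Icc 1 N, (1 + ψ ^ (-(h n : ℤ)))) atTop (nhds L) ∧
      Transcendental ℚ L := by
  have hψ1 : 1 < ψ := by
    by_contra hc
    push Not at hc
    nlinarith [sq_nonneg ψ, mul_nonneg (sq_nonneg ψ) (sub_nonneg.2 hc)]
  have hψ0 : 0 < ψ := by linarith
  obtain ⟨α, hαdef⟩ : ∃ α, α = ψ⁻¹ := ⟨_, rfl⟩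
  have hα0 : 0 < α := by rw [hαdef]; positivity
  have hα1 : α < 1 := by rw [hαdef]; exact inv_lt_one_of_one_lt₀ hψ1
  have hα : α ^ 3 + α = 1 := by
    rw [hαdef]
    field_simp
    linarith
  obtain ⟨k, hkdef⟩ : ∃ k : ℕ → ℕ, k = fun i => h (i + 1) := ⟨_, rfl⟩
  have hk : StrictMono k := by
    apply strictMono_nat_of_lt_succ
    intro n
    rw [hkdef]
    exact hmono (n + 1) (by omega)
  have hk1 : ∀ i, 1 ≤ k i := by
    intro i
    rw [hkdef]
    exact hpos (i + 1) (by omega)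
  have hprod : (fun N => ∏ n ∈ Finset.Icc 1 N, (1 + ψ ^ (-(h n : ℤ))))
      = fun N => ∏ i ∈ Finset.range N, (1 + α ^ (k i)) := by
    funext N
    induction N with
    | zero => simp
    | succ n ih =>
      rw [Finset.prod_Icc_succ_top (by omega), ih, Finset.prod_range_succ]
      congr 2
      rw [zpow_neg, zpow_natCast, hαdef, hkdef, inv_pow]
  obtain ⟨L, hlim, hlt, C0, hC0⟩ := prod_lim hα0 hα1 hk
  refine ⟨L, by rw [hprod]; exact hlim, ?_⟩
  intro halg
  obtain ⟨β, hb1, hb2⟩ := exists_beta α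
  have hbn : ‖β‖ ^ 2 = α ^ 2 + 1 := by
    rw [Complex.sq_norm, Complex.normSq_apply, ← hb2]
    ring
  have hβ : ‖β‖ ^ 2 * α = 1 := by
    rw [hbn]
    linarith [hα]
  have hβ1 : 1 < ‖β‖ := by
    by_contra hc
    push Not at hc
    nlinarith [norm_nonneg β, pow_pos hα0 2]
  have hn := norm_low α hα0 hα β hb1 hb2
  obtain ⟨C1, _, hC1⟩ := prod_beta hβ1 hk
  obtain ⟨C2, N0, hC2, hup⟩ := liou hα0 hα1 hβ hn hk hk1 hlt hC0 hlim halg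
  have hHpos : ∀ n, 1 ≤ n → (0 : ℝ) < ((∑ i ∈ Finset.range n, k i : ℕ) : ℝ) := by
    intro n hn1
    have h2 : k 0 ≤ ∑ i ∈ Finset.range n, k i :=
      Finset.single_le_sum (fun i _ => Nat.zero_le _) (Finset.mem_range.2 (by omega))
    have h3 := hk1 0
    exact_mod_cast (by omega : 0 < ∑ i ∈ Finset.range n, k i)
  have hgr : ∃ᶠ n : ℕ in atTop,
      ((8 : ℝ) / 3) ^ n ≤ ((∑ i ∈ Finset.range n, k i : ℕ) : ℝ) := by
    refine (hgrow.and_eventually (eventually_ge_atTop 1)).mono ?_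
    rintro n ⟨h2, h3⟩
    refine h2.trans ?_
    have h4 : k (n - 1) ≤ ∑ i ∈ Finset.range n, k i :=
      Finset.single_le_sum (fun i _ => Nat.zero_le _) (Finset.mem_range.2 (by omega))
    have h5 : k (n - 1) = h n := by
      rw [hkdef]
      simp only
      rw [Nat.sub_add_cancel h3]
    rw [h5] at h4
    exact_mod_cast h4
  choose nt hnt _ hwin using
    windows (H := fun n => ((∑ i ∈ Finset.range n, k i : ℕ) : ℝ)) hHpos hC2 hup hgr
  exact Dat.contra
    { α := α, hα0 := hα0, hα1 := hα1, β := β, hβ := hβ, hnorm := hn, k := k, hk := hk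
      hk1 := hk1, L := L, C0 := C0, hL := hC0, hlt := hlt, hP1 := prod_ge_one hα0 k
      C1 := C1, hPβ := hC1, nt := nt, hnt := hnt, hwin := hwin, C2 := C2, hC2 := hC2
      N0 := N0, hup := hup } halg
end
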